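/- Let n ≥ 1 and let Q and Q′ be real normal defining functions of dimension n, defining hypersurfaces M and M′ with complexifications ℳ and ℳ′. Assume M is of class 𝒞 at 0, and let ℋ = (f,g,f̃,g̃) be an HSPM sending (ℳ,0) into (ℳ′,0). Then at least one of the following holds: (i) ℋ is transversally null (g ≡ 0 and g̃ ≡ 0 near 0) and Q′(f(z,w), f̃(χ,τ), 0) = 0 for all (z,w) and (χ,τ) near 0; or (ii) ℋ is Segre transversal to ℳ′ at 0 (∂g/∂w(0,0) ≠ 0), ℋ is totally Segre nondegenerate at 0, there exists a point (z₀,w₀,χ₀,τ₀) with w₀ = Q(z₀,χ₀,τ₀) at which the Jacobians of (f,g) at (z₀,w₀) and of (f̃,g̃) at (χ₀,τ₀) are both invertible (so ℋ is a biholomorphism near a point of ℳ), and moreover M′ is of class 𝒞 at 0. -/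

import Mathlib

open Filter Topology Complex

namespace HSPMpaper

variable {n : ℕ}

/-- Partial derivative of `F` in the `i`-th coordinate direction. -/
noncomputable def pd (i : Fin n) (F : (Fin n → ℂ) → ℂ) : (Fin n → ℂ) → ℂ :=
  fun z => fderiv ℂ F z (Pi.single i 1)

/-- Iterated partial derivative `∂^α` for a multi-index `α`. -/
noncomputable def mpd (α : Fin n → ℕ) (F : (Fin n → ℂ) → ℂ) : (Fin n → ℂ) → ℂ :=
  ((List.ofFn fun i : Fin n => (pd i)^[α i]).foldr (· ∘ ·) id) F

/-- Componentwise complex conjugation on `ℂⁿ`. -/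
def conjV (z : Fin n → ℂ) : Fin n → ℂ := fun i => starRingEnd ℂ (z i)

/-- The conjugate defining function `Q̄(χ,z,τ) = conj (Q (conj χ) (conj z) (conj τ))`. -/
def QBar (Q : (Fin n → ℂ) → (Fin n → ℂ) → ℂ → ℂ) : (Fin n → ℂ) → (Fin n → ℂ) → ℂ → ℂ :=
  fun χ z τ => starRingEnd ℂ (Q (conjV χ) (conjV z) (starRingEnd ℂ τ))

/-- `Q` is a normal defining function (of dimension `n`): holomorphic near the origin of
`ℂⁿ × ℂⁿ × ℂ` and satisfying `Q(0,χ,τ) = τ` and `Q(z,0,τ) = τ` near `0`. -/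
def IsNormalDF (Q : (Fin n → ℂ) → (Fin n → ℂ) → ℂ → ℂ) : Prop :=
  (∀ᶠ p in 𝓝 (0 : (Fin n → ℂ) × (Fin n → ℂ) × ℂ),
      AnalyticAt ℂ (fun q : (Fin n → ℂ) × (Fin n → ℂ) × ℂ => Q q.1 q.2.1 q.2.2) p) ∧
  (∀ᶠ p in 𝓝 (0 : (Fin n → ℂ) × (Fin n → ℂ) × ℂ),
      Q 0 p.2.1 p.2.2 = p.2.2 ∧ Q p.1 0 p.2.2 = p.2.2)

/-- `Q` is a real normal defining function: normal and `Q(z,χ,Q̄(χ,z,w)) = w` near `0`. -/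
def IsRealNormalDF (Q : (Fin n → ℂ) → (Fin n → ℂ) → ℂ → ℂ) : Prop :=
  IsNormalDF Q ∧
  ∀ᶠ p in 𝓝 (0 : (Fin n → ℂ) × (Fin n → ℂ) × ℂ),
    Q p.1 p.2.1 (QBar Q p.2.1 p.1 p.2.2) = p.2.2

/-- `(f,g,f̃,g̃)` is a holomorphic Segre preserving map sending `(ℳ,0)` into `(ℳ',0)`. -/
def IsHSPM (Q Q' : (Fin n → ℂ) → (Fin n → ℂ) → ℂ → ℂ)
    (f : (Fin n → ℂ) → ℂ → Fin n → ℂ) (g : (Fin n → ℂ) → ℂ → ℂ)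
    (ft : (Fin n → ℂ) → ℂ → Fin n → ℂ) (gt : (Fin n → ℂ) → ℂ → ℂ) : Prop :=
  (∀ᶠ p in 𝓝 (0 : (Fin n → ℂ) × ℂ), AnalyticAt ℂ (fun q : (Fin n → ℂ) × ℂ => f q.1 q.2) p) ∧
  (∀ᶠ p in 𝓝 (0 : (Fin n → ℂ) × ℂ), AnalyticAt ℂ (fun q : (Fin n → ℂ) × ℂ => g q.1 q.2) p) ∧
  (∀ᶠ p in 𝓝 (0 : (Fin n → ℂ) × ℂ), AnalyticAt ℂ (fun q : (Fin n → ℂ) × ℂ => ft q.1 q.2) p) ∧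
  (∀ᶠ p in 𝓝 (0 : (Fin n → ℂ) × ℂ), AnalyticAt ℂ (fun q : (Fin n → ℂ) × ℂ => gt q.1 q.2) p) ∧
  f 0 0 = 0 ∧ g 0 0 = 0 ∧ ft 0 0 = 0 ∧ gt 0 0 = 0 ∧
  ∀ᶠ p in 𝓝 (0 : (Fin n → ℂ) × (Fin n → ℂ) × ℂ),
    g p.1 (Q p.1 p.2.1 p.2.2) =
      Q' (f p.1 (Q p.1 p.2.1 p.2.2)) (ft p.2.1 p.2.2) (gt p.2.1 p.2.2)

/-- `M` is of finite type at `0`: `(z,χ) ↦ Q(z,χ,0)` does not vanish identically near `0`. -/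
def FiniteType (Q : (Fin n → ℂ) → (Fin n → ℂ) → ℂ → ℂ) : Prop :=
  ¬ ∀ᶠ p in 𝓝 (0 : (Fin n → ℂ) × (Fin n → ℂ)), Q p.1 p.2 0 = 0

/-- Jacobian matrix of `z ↦ f(z,0)` at `z`. -/
noncomputable def jacz (f : (Fin n → ℂ) → ℂ → Fin n → ℂ) (z : Fin n → ℂ) :
    Matrix (Fin n) (Fin n) ℂ :=
  Matrix.of fun i j => pd j (fun z' => f z' 0 i) z

/-- `ℋ` is Segre transversal to `ℳ'` at `0`: `∂g/∂w(0,0) ≠ 0`. -/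
noncomputable def SegreTransversal (g : (Fin n → ℂ) → ℂ → ℂ) : Prop :=
  deriv (fun w => g 0 w) 0 ≠ 0

/-- `ℋ` is totally Segre nondegenerate at `0`. -/
def TotallySegreNondeg (f ft : (Fin n → ℂ) → ℂ → Fin n → ℂ) : Prop :=
  (¬ ∀ᶠ z in 𝓝 (0 : Fin n → ℂ), (jacz f z).det = 0) ∧
  (¬ ∀ᶠ χ in 𝓝 (0 : Fin n → ℂ), (jacz ft χ).det = 0)

/-- `ℋ` is transversally null: `g ≡ 0` and `g̃ ≡ 0` near `0`. -/
def TransversallyNull (g gt : (Fin n → ℂ) → ℂ → ℂ) : Prop :=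
  (∀ᶠ p in 𝓝 (0 : (Fin n → ℂ) × ℂ), g p.1 p.2 = 0) ∧
  (∀ᶠ p in 𝓝 (0 : (Fin n → ℂ) × ℂ), gt p.1 p.2 = 0)

/-- The `k`-th coordinate direction in `ℂⁿ × ℂ`. -/
noncomputable def dirCT (n : ℕ) (k : Fin (n + 1)) : (Fin n → ℂ) × ℂ :=
  if h : (k : ℕ) < n then (Pi.single ⟨k, h⟩ 1, 0) else (0, 1)

/-- `M` is holomorphically nondegenerate at `0`: for some `K`, the map
`(χ,τ) ↦ (∂_z^α Q(0,χ,τ))_{|α| ≤ K}` has generic rank `n+1`. -/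
def HolNondeg (Q : (Fin n → ℂ) → (Fin n → ℂ) → ℂ → ℂ) : Prop :=
  ∃ K : ℕ, ∃ A : Fin (n + 1) → Fin n → ℕ, (∀ j, (∑ i, A j i) ≤ K) ∧
    ¬ ∀ᶠ p in 𝓝 (0 : (Fin n → ℂ) × ℂ),
      (Matrix.of fun j k : Fin (n + 1) =>
        fderiv ℂ (fun q : (Fin n → ℂ) × ℂ => mpd (A j) (fun z => Q z q.1 q.2) 0) p
          (dirCT n k)).det = 0

/-- `M` is of class `𝒞` at `0`: for some `K`, the map
`χ ↦ (∂_z^α Q(0,χ,0))_{|α| ≤ K}` has generic rank `n`. -/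
def ClassC (Q : (Fin n → ℂ) → (Fin n → ℂ) → ℂ → ℂ) : Prop :=
  ∃ K : ℕ, ∃ A : Fin n → Fin n → ℕ, (∀ j, (∑ i, A j i) ≤ K) ∧
    ¬ ∀ᶠ χ in 𝓝 (0 : Fin n → ℂ),
      (Matrix.of fun j k : Fin n =>
        pd k (fun χ' => mpd (A j) (fun z => Q z χ' 0) 0) χ).det = 0

/-- `M` is finitely nondegenerate at `0`: for some `K`, the vectors
`∂_χ ∂_z^α Q(0,0,0)`, `|α| ≤ K`, span `ℂⁿ`. -/
def FinNondeg (Q : (Fin n → ℂ) → (Fin n → ℂ) → ℂ → ℂ) : Prop :=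
  ∃ K : ℕ, Submodule.span ℂ
    {v : Fin n → ℂ | ∃ α : Fin n → ℕ, (∑ i, α i) ≤ K ∧
      v = fun i => pd i (fun χ => mpd α (fun z => Q z χ 0) 0) 0} = ⊤

/-- Full Jacobian matrix of `(z,w) ↦ (f(z,w), g(z,w))` at `p ∈ ℂⁿ × ℂ`. -/
noncomputable def jacFull (f : (Fin n → ℂ) → ℂ → Fin n → ℂ) (g : (Fin n → ℂ) → ℂ → ℂ)
    (p : (Fin n → ℂ) × ℂ) : Matrix (Fin (n + 1)) (Fin (n + 1)) ℂ :=
  Matrix.of fun i k =>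
    fderiv ℂ (fun q : (Fin n → ℂ) × ℂ => (Fin.snoc (f q.1 q.2) (g q.1 q.2) : Fin (n + 1) → ℂ) i) p (dirCT n k)

/-- The degree-`d` homogeneous term of the Taylor series of `φ` at `0`. -/
noncomputable def homogTerm (d : ℕ) (φ : (Fin n → ℂ) → ℂ) : (Fin n → ℂ) → ℂ :=
  fun z => iteratedFDeriv ℂ d φ 0 (fun _ => z) / (d.factorial : ℂ)

/-- The order of vanishing of `φ` at `0`. -/
noncomputable def vanishOrder (φ : (Fin n → ℂ) → ℂ) : ℕ :=
  sInf {d | homogTerm d φ ≠ 0}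

/-!
On `(z, w)`, `(χ, τ)` consider `Φ = Q' (f, f̃, g̃) - g`, which vanishes on the complexified
hypersurface `ℳ : w = Q (z, χ, τ)`. For fixed `p = (χ, τ)` the slice of `ℳ` is the Segre graph
`w = Q (z, p)`, and `M` is of class `𝒞` exactly when these graphs move to first order in every
direction at generic parameters.

Suppose that the Jacobian of `(f̃, g̃)` is degenerate everywhere. Moving `p` in a kernel direction
leaves `(f̃, g̃)` fixed and moves the Segre graph, so `∂Φ/∂w` also vanishes on `ℳ`. Iterating, all
`w`-derivatives of `Φ` vanish on `ℳ`, hence `Φ ≡ 0`, and normality of `Q'` gives the null case. By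
symmetry the same holds if the Jacobian of `(f, g)` is degenerate.

Otherwise put `u = ∂Φ/∂w` on `ℳ`. There `dΦ = u (dw - dQ)`, so a zero of `u` lies over zeros of
both Jacobian determinants. A zero of `u` that lies over a proper analytic subset in one factor
cannot be isolated in the fibre, by Hurwitz's theorem, so it fills the whole fibre over its
projection. If `u (0) = 0`, using this for one projection and then for the other shows that `u`
vanishes on the Segre graphs `τ = P (χ, z, 0)`, where `P` solves `w = Q (z, χ, τ)` for `τ`. These
graphs are moving too, so the Jacobian determinant of `(f̃, g̃)` vanishes identically, a
contradiction. Hence `u (0) = -∂g/∂w (0)` is nonzero, and `dΦ = u (dw - dQ)` transports the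
nondegeneracy of `Q` to the map and to `Q'`.
-/

attribute [local fun_prop] analyticAt_fst analyticAt_snd

section AnalyticGerms

variable {X Y : Type*} [NormedAddCommGroup X] [NormedSpace ℂ X]
  [NormedAddCommGroup Y] [NormedSpace ℂ Y]

theorem analyticAt_fderiv_apply_const [CompleteSpace Y] {F : X → Y} {x : X}
    (hF : AnalyticAt ℂ F x) (v : X) : AnalyticAt ℂ (fun y => fderiv ℂ F y v) x :=
  (ContinuousLinearMap.apply ℂ Y v).analyticAt _ |>.comp hF.fderiv

theorem analyticAt_iteratedFDeriv [CompleteSpace Y] {F : X → Y} {x : X} (hF : AnalyticAt ℂ F x)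
    (k : ℕ) : AnalyticAt ℂ (iteratedFDeriv ℂ k F) x :=
  AnalyticOnNhd.iteratedFDeriv (s := {y | AnalyticAt ℂ F y}) (fun _ h => h) k x hF

theorem eventually_eq_zero_of_frequently_eventually_eq_zero {F : X → ℂ} {x₀ : X}
    (hF : AnalyticAt ℂ F x₀) (h : ∃ᶠ x in 𝓝 x₀, ∀ᶠ y in 𝓝 x, F y = 0) :
    ∀ᶠ y in 𝓝 x₀, F y = 0 := by
  obtain ⟨r, hr, hball⟩ := Metric.eventually_nhds_iff_ball.1 hF.eventually_analyticAt
  obtain ⟨x, hx, hxr⟩ := (h.and_eventually (Metric.ball_mem_nhds x₀ hr)).exists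
  filter_upwards [Metric.ball_mem_nhds x₀ hr] using
    AnalyticOnNhd.eqOn_zero_of_preconnected_of_eventuallyEq_zero hball
      (convex_ball x₀ r).isPreconnected hxr hx

theorem eventually_eq_zero_or_of_mul {F G : X → ℂ} {x₀ : X}
    (hF : AnalyticAt ℂ F x₀) (hG : AnalyticAt ℂ G x₀) (h : ∀ᶠ x in 𝓝 x₀, F x * G x = 0) :
    (∀ᶠ x in 𝓝 x₀, F x = 0) ∨ ∀ᶠ x in 𝓝 x₀, G x = 0 := by
  refine or_iff_not_imp_left.2 fun hne =>
    eventually_eq_zero_of_frequently_eventually_eq_zero hG ?_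
  refine ((not_eventually.1 hne).and_eventually
    (h.eventually_nhds.and hF.eventually_analyticAt)).mono ?_
  rintro x ⟨hx, hmul, hFx⟩
  filter_upwards [hmul, hFx.continuousAt.eventually_ne hx] with y hy hFy
  exact (mul_eq_zero.1 hy).resolve_left hFy

theorem eventually_forall_eq_zero {ι : Type*} {F : ι → X → ℂ} {x₀ : X}
    (hF : ∀ᶠ x in 𝓝 x₀, ∀ i, AnalyticAt ℂ (F i) x) (h : ∀ i, ∀ᶠ x in 𝓝 x₀, F i x = 0) :
    ∀ᶠ x in 𝓝 x₀, ∀ i, F i x = 0 := by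
  obtain ⟨r, hr, hball⟩ := Metric.eventually_nhds_iff_ball.1 hF
  filter_upwards [Metric.ball_mem_nhds x₀ hr] with x hx i
  exact AnalyticOnNhd.eqOn_zero_of_preconnected_of_eventuallyEq_zero
    (fun y hy => hball y hy i) (convex_ball x₀ r).isPreconnected
    (Metric.mem_ball_self hr) (h i) hx

theorem exists_ball_eq_zero_of_slice {F : X × Y → ℂ} {x₀ : X} {y₀ : Y}
    (hF : AnalyticAt ℂ F (x₀, y₀)) :
    ∃ r > 0, ∀ y ∈ Metric.ball y₀ r, (∀ᶠ x in 𝓝 x₀, F (x, y) = 0) →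
      ∀ x ∈ Metric.ball x₀ r, F (x, y) = 0 := by
  obtain ⟨r, hr, hball⟩ := Metric.eventually_nhds_iff_ball.1 hF.eventually_analyticAt
  simp only [← ball_prod_same] at hball
  refine ⟨r, hr, fun y hy h => ?_⟩
  have hslice : AnalyticOnNhd ℂ (fun x => F (x, y)) (Metric.ball x₀ r) := fun x hx =>
    (hball (x, y) ⟨hx, hy⟩).comp (f := fun x => (x, y)) (by fun_prop)
  exact hslice.eqOn_zero_of_preconnected_of_eventuallyEq_zero
    (convex_ball x₀ r).isPreconnected (Metric.mem_ball_self hr) h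

theorem eventually_eq_zero_of_frequently_slice {F : X × Y → ℂ} {x₀ : X} {y₀ : Y}
    (hF : AnalyticAt ℂ F (x₀, y₀))
    (h : ∃ᶠ y₁ in 𝓝 y₀, ∀ᶠ y in 𝓝 y₁, ∀ᶠ x in 𝓝 x₀, F (x, y) = 0) :
    ∀ᶠ p in 𝓝 (x₀, y₀), F p = 0 := by
  obtain ⟨r, hr, hslice⟩ := exists_ball_eq_zero_of_slice hF
  refine eventually_eq_zero_of_frequently_eventually_eq_zero hF ?_
  have hincl : Tendsto (fun y => (x₀, y)) (𝓝 y₀) (𝓝 (x₀, y₀)) :=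
    tendsto_const_nhds.prodMk_nhds tendsto_id
  refine hincl.frequently ((h.and_eventually (Metric.ball_mem_nhds y₀ hr)).mono ?_)
  rintro y₁ ⟨hy₁, hy₁r⟩
  rw [nhds_prod_eq]
  filter_upwards [prod_mem_prod (Metric.ball_mem_nhds x₀ hr)
    (hy₁.and (Metric.isOpen_ball.eventually_mem hy₁r))] with p hp
  exact hslice p.2 hp.2.2 hp.2.1 p.1 hp.1

theorem eventually_hasSum_iteratedFDeriv {F : X → ℂ} {x₀ : X} (hF : AnalyticAt ℂ F x₀) :
    ∀ᶠ p in 𝓝 (x₀, (0 : X)), HasSum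
      (fun k => (k.factorial : ℂ)⁻¹ • iteratedFDeriv ℂ k F p.1 fun _ => p.2) (F (p.1 + p.2)) := by
  obtain ⟨s, r, hs⟩ := hF
  have hr : 0 < r / 2 := ENNReal.half_pos hs.r_pos.ne'
  rw [nhds_prod_eq]
  filter_upwards [prod_mem_prod (Metric.eball_mem_nhds x₀ hr) (Metric.eball_mem_nhds 0 hr)]
  rintro ⟨x, v⟩ ⟨hx, hv⟩
  simp only [Metric.mem_eball, edist_eq_enorm_sub] at hx
  have hseries := hs.changeOrigin (hx.trans_le ENNReal.half_le_self)
  rw [add_sub_cancel] at hseries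
  refine hseries.hasSum_iteratedFDeriv ((Metric.mem_eball.1 hv).trans_le ?_)
  refine ENNReal.le_sub_of_add_le_right (hx.trans_le le_top).ne ?_
  exact (add_le_add_right hx.le _).trans_eq (ENNReal.add_halves r)

theorem eventually_eq_zero_along_of_iteratedFDeriv_eq_zero [CompleteSpace Y] {F : Y → ℂ}
    {γ : X → Y} {x₀ : X} (hγ : AnalyticAt ℂ γ x₀) (hF : AnalyticAt ℂ F (γ x₀)) (e : Y)
    (h : ∀ k, ∀ᶠ x in 𝓝 x₀, iteratedFDeriv ℂ k F (γ x) (fun _ => e) = 0) :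
    ∀ᶠ p in 𝓝 (x₀, (0 : ℂ)), F (γ p.1 + p.2 • e) = 0 := by
  have han : ∀ᶠ x in 𝓝 x₀, ∀ k, AnalyticAt ℂ
      (fun x => iteratedFDeriv ℂ k F (γ x) (fun _ => e)) x := by
    filter_upwards [hγ.eventually_analyticAt,
      hγ.continuousAt.eventually hF.eventually_analyticAt] with x hγx hFx k
    exact ((ContinuousMultilinearMap.apply ℂ (fun _ : Fin k => Y) ℂ fun _ => e).analyticAt _).comp
      ((analyticAt_iteratedFDeriv hFx k).comp hγx)
  have hincl : Tendsto (fun p : X × ℂ => (γ p.1, p.2 • e)) (𝓝 (x₀, 0)) (𝓝 (γ x₀, 0)) := by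
    have hγ' : ContinuousAt (fun p : X × ℂ => γ p.1) (x₀, 0) :=
      ContinuousAt.comp (f := Prod.fst) hγ.continuousAt continuousAt_fst
    have hsmul : ContinuousAt (fun p : X × ℂ => p.2 • e) (x₀, 0) := by fun_prop
    simpa only [ContinuousAt, zero_smul] using hγ'.prodMk hsmul
  have hfst : Tendsto Prod.fst (𝓝 (x₀, (0 : ℂ))) (𝓝 x₀) := continuousAt_fst
  filter_upwards [hfst.eventually (eventually_forall_eq_zero han h),
    hincl.eventually (eventually_hasSum_iteratedFDeriv hF)] with p hzero hsum
  refine hsum.unique ?_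
  convert hasSum_zero with k
  rw [(iteratedFDeriv ℂ k F (γ p.1)).map_smul_univ (fun _ => p.2) (fun _ => e), hzero k]
  simp only [smul_zero]

theorem eventually_eq_zero_of_iteratedFDeriv_eq_zero {F : X → ℂ} {x₀ : X}
    (hF : AnalyticAt ℂ F x₀) (h : ∀ k, iteratedFDeriv ℂ k F x₀ = 0) :
    ∀ᶠ x in 𝓝 x₀, F x = 0 := by
  have hincl : Tendsto (fun x => (x₀, x - x₀)) (𝓝 x₀) (𝓝 (x₀, 0)) :=
    Continuous.tendsto' (by fun_prop) _ _ (by simp only [sub_self])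
  filter_upwards [hincl.eventually (eventually_hasSum_iteratedFDeriv hF)] with x hsum
  rw [add_sub_cancel] at hsum
  refine hsum.unique ?_
  simpa only [h, zero_apply, smul_zero] using hasSum_zero

end AnalyticGerms

section Hurwitz

variable {X S : Type*} [NormedAddCommGroup X] [NormedSpace ℂ X]
  [NormedAddCommGroup S] [NormedSpace ℂ S]

theorem exists_direction_eventually_ne_zero {K : S → ℂ} {s₀ : S} (hK : AnalyticAt ℂ K s₀)
    (hne : ¬ ∀ᶠ s in 𝓝 s₀, K s = 0) : ∃ e : S, ∀ᶠ t in 𝓝[≠] (0 : ℂ), K (s₀ + t • e) ≠ 0 := by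
  obtain ⟨r, hr, hball⟩ := Metric.eventually_nhds_iff_ball.1 hK.eventually_analyticAt
  obtain ⟨s, hs, hsr⟩ := ((not_eventually.1 hne).and_eventually
    (Metric.ball_mem_nhds s₀ hr)).exists
  set line : ℂ → S := fun t => s₀ + t • (s - s₀) with hline
  have hline0 : line 0 = s₀ := by simp only [hline, zero_smul, add_zero]
  have hline1 : line 1 = s := by simp only [hline, one_smul, add_sub_cancel]
  have han : AnalyticOnNhd ℂ (fun t => K (line t)) (line ⁻¹' Metric.ball s₀ r) := fun t ht =>
    (hball _ ht).comp (f := line) (by fun_prop)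
  have hconv : Convex ℝ (line ⁻¹' Metric.ball s₀ r) :=
    ((convex_ball s₀ r).translate_preimage_right s₀).linear_preimage
      ((LinearMap.toSpanSingleton ℂ S (s - s₀)).restrictScalars ℝ)
  have h0 : (0 : ℂ) ∈ line ⁻¹' Metric.ball s₀ r := by
    simpa only [Set.mem_preimage, hline0] using Metric.mem_ball_self hr
  have h1 : (1 : ℂ) ∈ line ⁻¹' Metric.ball s₀ r := by rwa [Set.mem_preimage, hline1]
  refine ⟨s - s₀, (han 0 h0).eventually_eq_zero_or_eventually_ne_zero.resolve_left fun hz => ?_⟩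
  have hK1 : K (line 1) = 0 :=
    han.eqOn_zero_of_preconnected_of_eventuallyEq_zero hconv.isPreconnected h0 hz h1
  exact hs (hline1 ▸ hK1)

theorem le_norm_center_of_forall_sphere {f : ℂ → ℂ} {σ δ : ℝ} (hσ : 0 < σ) (hδ : 0 < δ)
    (hf : DifferentiableOn ℂ f (Metric.closedBall 0 σ))
    (hne : ∀ t ∈ Metric.closedBall (0 : ℂ) σ, f t ≠ 0)
    (hle : ∀ t ∈ Metric.sphere (0 : ℂ) σ, δ ≤ ‖f t‖) : δ ≤ ‖f 0‖ := by
  have hinv : ‖(f 0)⁻¹‖ ≤ δ⁻¹ := by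
    refine norm_le_of_forall_mem_frontier_norm_le (U := Metric.ball (0 : ℂ) σ)
      (f := fun t => (f t)⁻¹) Metric.isBounded_ball ?_ (fun t ht => ?_)
      (subset_closure (Metric.mem_ball_self hσ))
    · exact (closure_ball (0 : ℂ) hσ.ne' ▸ hf.inv hne).diffContOnCl
    · rw [frontier_ball _ hσ.ne'] at ht
      rw [norm_inv]
      exact inv_anti₀ hδ (hle t ht)
  rw [norm_inv] at hinv
  exact (inv_le_inv₀ (norm_pos_iff.2 (hne 0 (Metric.mem_closedBall_self hσ.le))) hδ).1 hinv

theorem exists_forall_le_norm_of_isCompact {T Z : Type*} [TopologicalSpace T] [TopologicalSpace Z]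
    {C : Set T} (hC : IsCompact C) {V : Z × T → ℂ} {x₀ : Z}
    (hV : ∀ t ∈ C, ContinuousAt V (x₀, t)) (hne : ∀ t ∈ C, V (x₀, t) ≠ 0) :
    ∃ δ > 0, ∀ᶠ x in 𝓝 x₀, ∀ t ∈ C, δ ≤ ‖V (x, t)‖ := by
  obtain rfl | hCne := C.eq_empty_or_nonempty
  · exact ⟨1, one_pos, by simp⟩
  have hcont : ContinuousOn (fun t => ‖V (x₀, t)‖) C := fun t ht =>
    ((hV t ht).comp (f := fun t => (x₀, t)) (by fun_prop)).norm.continuousWithinAt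
  obtain ⟨t₀, ht₀, hmin⟩ := hC.exists_isMinOn hCne hcont
  have hpos : 0 < ‖V (x₀, t₀)‖ := norm_pos_iff.2 (hne t₀ ht₀)
  refine ⟨‖V (x₀, t₀)‖ / 2, half_pos hpos,
    hC.eventually_forall_of_forall_eventually fun t ht => ?_⟩
  filter_upwards [(hV t ht).norm.eventually_const_lt
    ((half_lt_self hpos).trans_le (hmin ht))] with x hx using hx.le

theorem eventually_eq_zero_of_forall_ne_zero {V : X × ℂ → ℂ} {x₀ : X}
    (hV : AnalyticAt ℂ V (x₀, 0))
    (hne : ∀ᶠ p in 𝓝 (x₀, (0 : ℂ)), p.2 ≠ 0 → V p ≠ 0) (h0 : V (x₀, 0) = 0) :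
    ∀ᶠ x in 𝓝 x₀, V (x, 0) = 0 := by
  obtain ⟨ρ, hρ, hgood⟩ := Metric.eventually_nhds_iff_ball.1 (hV.eventually_analyticAt.and hne)
  simp only [← ball_prod_same] at hgood
  have hσ : 0 < ρ / 2 := half_pos hρ
  have hsub : Metric.closedBall (0 : ℂ) (ρ / 2) ⊆ Metric.ball 0 ρ :=
    Metric.closedBall_subset_ball (half_lt_self hρ)
  have hsphere : ∀ t ∈ Metric.sphere (0 : ℂ) (ρ / 2),
      (x₀, t) ∈ Metric.ball x₀ ρ ×ˢ Metric.ball 0 ρ :=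
    fun t ht => ⟨Metric.mem_ball_self hρ, hsub (Metric.sphere_subset_closedBall ht)⟩
  obtain ⟨δ, hδ, hbound⟩ := exists_forall_le_norm_of_isCompact (isCompact_sphere (0 : ℂ) (ρ / 2))
    (fun t ht => (hgood _ (hsphere t ht)).1.continuousAt)
    (fun t ht => (hgood _ (hsphere t ht)).2 (ne_zero_of_mem_sphere hσ.ne' ⟨t, ht⟩))
  have hsmall : ∀ᶠ x in 𝓝 x₀, ‖V (x, 0)‖ < δ := by
    refine (ContinuousAt.comp (f := fun x : X => (x, (0 : ℂ))) hV.continuousAt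
      (by fun_prop)).norm.eventually_lt_const ?_
    simpa only [Function.comp_apply, h0, norm_zero] using hδ
  filter_upwards [hbound, hsmall, Metric.ball_mem_nhds x₀ hρ] with x hx hxδ hxρ
  by_contra hx0
  refine hxδ.not_ge (le_norm_center_of_forall_sphere (f := fun t => V (x, t)) hσ hδ
    (fun t ht => ?_) (fun t ht => ?_) hx)
  · exact ((hgood (x, t) ⟨hxρ, hsub ht⟩).1.differentiableAt.comp t
      (f := fun t => (x, t)) (by fun_prop)).differentiableWithinAt
  · rcases eq_or_ne t 0 with rfl | ht0
    · exact hx0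
    · exact (hgood (x, t) ⟨hxρ, hsub ht⟩).2 ht0

theorem eventually_eq_zero_of_zeros_over_zeros {U : X × S → ℂ} {K : S → ℂ} {x₀ : X} {s₀ : S}
    (hU : AnalyticAt ℂ U (x₀, s₀)) (hK : AnalyticAt ℂ K s₀) (hKne : ¬ ∀ᶠ s in 𝓝 s₀, K s = 0)
    (hUK : ∀ᶠ y in 𝓝 (x₀, s₀), U y = 0 → K y.2 = 0) (h0 : U (x₀, s₀) = 0) :
    ∀ᶠ x in 𝓝 x₀, U (x, s₀) = 0 := by
  obtain ⟨e, he⟩ := exists_direction_eventually_ne_zero hK hKne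
  have hbase : s₀ + (0 : ℂ) • e = s₀ := by rw [zero_smul, add_zero]
  have hline : Tendsto (fun p : X × ℂ => (p.1, s₀ + p.2 • e)) (𝓝 (x₀, 0)) (𝓝 (x₀, s₀)) :=
    Continuous.tendsto' (by fun_prop) _ _ (by rw [hbase])
  have hV : AnalyticAt ℂ (fun p : X × ℂ => U (p.1, s₀ + p.2 • e)) (x₀, 0) :=
    AnalyticAt.comp (f := fun p : X × ℂ => (p.1, s₀ + p.2 • e)) (by rwa [hbase])
      (by fun_prop)
  have hne : ∀ᶠ p in 𝓝 (x₀, (0 : ℂ)), p.2 ≠ 0 → U (p.1, s₀ + p.2 • e) ≠ 0 := by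
    have hsnd : Tendsto Prod.snd (𝓝 (x₀, (0 : ℂ))) (𝓝 0) := continuousAt_snd
    filter_upwards [hline.eventually hUK, hsnd.eventually (eventually_nhdsWithin_iff.1 he)]
      with p hp hKp hp0 hU0 using hKp hp0 (hp hU0)
  simpa only [hbase] using eventually_eq_zero_of_forall_ne_zero hV hne (by rwa [hbase])

end Hurwitz

section Separating

variable {E F G : Type*} [NormedAddCommGroup E] [NormedSpace ℂ E]
  [NormedAddCommGroup F] [NormedSpace ℂ F] [NormedAddCommGroup G] [NormedSpace ℂ G]

/-- The germs at `z = 0` of the graphs `w = q (z, p)` move to first order at the parameter `p` in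
every direction. -/
def Separating (q : E × F → ℂ) (p : F) : Prop :=
  ∀ v : F, (∀ᶠ z in 𝓝 (0 : E), fderiv ℂ q (z, p) (0, v) = 0) → v = 0

theorem tendsto_prodMk_zero_left {E F : Type*} [TopologicalSpace E] [TopologicalSpace F]
    [Zero E] [Zero F] : Tendsto (fun p : F => ((0 : E), p)) (𝓝 0) (𝓝 0) :=
  Continuous.tendsto' (by fun_prop) 0 0 rfl

theorem tendsto_prodMk_zero_right {E F : Type*} [TopologicalSpace E] [TopologicalSpace F]
    [Zero E] [Zero F] : Tendsto (fun z : E => (z, (0 : F))) (𝓝 0) (𝓝 0) :=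
  Continuous.tendsto' (by fun_prop) 0 0 rfl

theorem Separating.eventually_exists_ne_zero {q : E × F → ℂ} {p₀ v : F}
    (hq : AnalyticAt ℂ q (0, p₀)) (hsep : Separating q p₀) (hv : v ≠ 0) :
    ∀ᶠ x in 𝓝 (p₀, v), ¬ ∀ᶠ z in 𝓝 (0 : E), fderiv ℂ q (z, x.1) (0, x.2) = 0 := by
  have hD : AnalyticAt ℂ (fun y : E × F × F => fderiv ℂ q (y.1, y.2.1) (0, y.2.2)) (0, p₀, v) :=
    ((ContinuousLinearMap.id ℂ (E × F →L[ℂ] ℂ)).analyticAt_bilinear _).comp₂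
      (hq.fderiv.comp (f := fun y : E × F × F => (y.1, y.2.1)) (by fun_prop)) (by fun_prop)
  obtain ⟨r, hr, hslice⟩ := exists_ball_eq_zero_of_slice hD
  have hincl : Tendsto (fun z : E => (z, p₀, v)) (𝓝 0) (𝓝 (0, p₀, v)) :=
    tendsto_id.prodMk_nhds tendsto_const_nhds
  obtain ⟨z, hz, hzr, hDz⟩ := ((not_eventually.1 (mt (hsep v) hv)).and_eventually
    ((Metric.isOpen_ball.eventually_mem (Metric.mem_ball_self hr)).and
      (hincl.eventually hD.eventually_analyticAt))).exists
  have hne : ∀ᶠ x in 𝓝 (p₀, v), fderiv ℂ q (z, x.1) (0, x.2) ≠ 0 :=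
    (ContinuousAt.comp (f := fun x : F × F => (z, x)) hDz.continuousAt
      (by fun_prop)).eventually_ne hz
  filter_upwards [hne, Metric.ball_mem_nhds (p₀, v) hr] with x hx hxr hzero
  exact hx (hslice x hxr hzero z hzr)

theorem eventually_separating_of_separating [FiniteDimensional ℂ F] {q : E × F → ℂ} {p₀ : F}
    (hq : AnalyticAt ℂ q (0, p₀)) (hsep : Separating q p₀) :
    ∀ᶠ p in 𝓝 p₀, Separating q p := by
  have : ProperSpace F := FiniteDimensional.proper ℂ F
  have hsphere : ∀ᶠ p in 𝓝 p₀, ∀ v ∈ Metric.sphere (0 : F) 1,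
      ¬ ∀ᶠ z in 𝓝 (0 : E), fderiv ℂ q (z, p) (0, v) = 0 :=
    (isCompact_sphere (0 : F) 1).eventually_forall_of_forall_eventually fun v hv =>
      hsep.eventually_exists_ne_zero hq (ne_zero_of_mem_unit_sphere ⟨v, hv⟩)
  filter_upwards [hsphere] with p hp v hv
  by_contra hv0
  refine hp (((‖v‖⁻¹ : ℝ) : ℂ) • v) (by simp [norm_smul, norm_ne_zero_iff.2 hv0]) ?_
  filter_upwards [hv] with z hz
  rw [← smul_zero (((‖v‖⁻¹ : ℝ) : ℂ)), ← Prod.smul_mk, map_smul, hz, smul_zero]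

theorem fderiv_comp_graph_apply {q : E × F → ℂ} {h : F → G} {Ψ : (E × ℂ) × G → ℂ} {x : E × F}
    (hq : DifferentiableAt ℂ q x) (hh : DifferentiableAt ℂ h x.2)
    (hΨ : DifferentiableAt ℂ Ψ ((x.1, q x), h x.2)) (a : E) (v : F) :
    fderiv ℂ (fun x : E × F => Ψ ((x.1, q x), h x.2)) x (a, v) =
      fderiv ℂ Ψ ((x.1, q x), h x.2) ((a, fderiv ℂ q x (a, v)), fderiv ℂ h x.2 v) := by
  have hγ : HasFDerivAt (fun x : E × F => ((x.1, q x), h x.2)) _ x :=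
    (hasFDerivAt_fst.prodMk hq.hasFDerivAt).prodMk
      (hh.hasFDerivAt.comp x (hasFDerivAt_snd (𝕜 := ℂ)))
  exact DFunLike.congr_fun (hΨ.hasFDerivAt.comp x hγ).fderiv (a, v)

theorem eventually_fderiv_mul_fderiv_eq_zero [CompleteSpace G] {q : E × F → ℂ}
    (hq : AnalyticAt ℂ q 0) (hq0 : q 0 = 0) {h : F → G} (hh : AnalyticAt ℂ h 0) (h0 : h 0 = 0)
    {Ψ : (E × ℂ) × G → ℂ} (hΨ : AnalyticAt ℂ Ψ 0)
    (hzero : ∀ᶠ x in 𝓝 (0 : E × F), Ψ ((x.1, q x), h x.2) = 0) :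
    ∀ᶠ x in 𝓝 (0 : E × F), ∀ v, fderiv ℂ h x.2 v = 0 →
      fderiv ℂ q x (0, v) * fderiv ℂ Ψ ((x.1, q x), h x.2) ((0, 1), 0) = 0 := by
  have hh' : AnalyticAt ℂ h (0 : E × F).2 := hh
  set γ : E × F → (E × ℂ) × G := fun x => ((x.1, q x), h x.2) with hγdef
  have hγ : ContinuousAt γ 0 := by fun_prop
  have hγ0 : γ 0 = 0 := by
    simp only [hγdef, Prod.fst_zero, Prod.snd_zero, hq0, h0, Prod.mk_zero_zero]
  have hhsnd : ∀ᶠ x in 𝓝 (0 : E × F), AnalyticAt ℂ h x.2 :=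
    continuousAt_snd.eventually hh'.eventually_analyticAt
  filter_upwards [hzero.eventually_nhds, hq.eventually_analyticAt, hhsnd,
    hγ.eventually (hγ0.symm ▸ hΨ.eventually_analyticAt)] with x hx hqx hhx hΨx v hv
  have hconst : fderiv ℂ (fun x => Ψ (γ x)) x (0, v) = 0 := by
    rw [EventuallyEq.fderiv_eq (f := fun _ => (0 : ℂ)) hx, fderiv_const_apply, zero_apply]
  rw [fderiv_comp_graph_apply hqx.differentiableAt hhx.differentiableAt hΨx.differentiableAt,
    hv] at hconst
  rw [← hconst, ← smul_eq_mul, ← map_smul]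
  simp

theorem fderiv_eq_zero_of_degenerate [CompleteSpace G] [FiniteDimensional ℂ F]
    {q : E × F → ℂ} (hq : AnalyticAt ℂ q 0) (hq0 : q 0 = 0)
    (hsep : ∃ᶠ p in 𝓝 (0 : F), Separating q p) {h : F → G} (hh : AnalyticAt ℂ h 0)
    (h0 : h 0 = 0) (hdeg : ∀ᶠ p in 𝓝 (0 : F), ∃ v ≠ 0, fderiv ℂ h p v = 0)
    {Ψ : (E × ℂ) × G → ℂ} (hΨ : AnalyticAt ℂ Ψ 0)
    (hzero : ∀ᶠ x in 𝓝 (0 : E × F), Ψ ((x.1, q x), h x.2) = 0) :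
    ∀ᶠ x in 𝓝 (0 : E × F), fderiv ℂ Ψ ((x.1, q x), h x.2) ((0, 1), 0) = 0 := by
  have hh' : AnalyticAt ℂ h (0 : E × F).2 := hh
  set γ : E × F → (E × ℂ) × G := fun x => ((x.1, q x), h x.2) with hγdef
  have hγ : AnalyticAt ℂ γ 0 := by fun_prop
  have hγ0 : γ 0 = 0 := by
    simp only [hγdef, Prod.fst_zero, Prod.snd_zero, hq0, h0, Prod.mk_zero_zero]
  have hD : AnalyticAt ℂ (fun x => fderiv ℂ Ψ (γ x) ((0, 1), 0)) 0 :=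
    AnalyticAt.comp (f := γ) (g := fun y => fderiv ℂ Ψ y ((0, 1), 0))
      (analyticAt_fderiv_apply_const (hγ0 ▸ hΨ) _) hγ
  have hkey := eventually_fderiv_mul_fderiv_eq_zero hq hq0 hh h0 hΨ hzero
  refine eventually_eq_zero_of_frequently_slice (x₀ := (0 : E)) (y₀ := (0 : F)) hD ?_
  have hgood : ∀ᶠ p in 𝓝 (0 : F), AnalyticAt ℂ q (0, p) ∧
      AnalyticAt ℂ (fun x => fderiv ℂ Ψ (γ x) ((0, 1), 0)) (0, p) ∧
      ∀ᶠ x in 𝓝 (0, p), ∀ v, fderiv ℂ h x.2 v = 0 →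
        fderiv ℂ q x (0, v) * fderiv ℂ Ψ (γ x) ((0, 1), 0) = 0 :=
    tendsto_prodMk_zero_left.eventually
      (hq.eventually_analyticAt.and (hD.eventually_analyticAt.and hkey.eventually_nhds))
  refine (hsep.and_eventually (hdeg.and hgood).eventually_nhds).mono ?_
  rintro p₀ ⟨hp₀, hp₀'⟩
  filter_upwards [eventually_separating_of_separating hp₀'.self_of_nhds.2.1 hp₀, hp₀']
    with p hp ⟨⟨v, hv0, hv⟩, hqp, hDp, hkeyp⟩
  have hslice : Tendsto (fun z : E => (z, p)) (𝓝 0) (𝓝 (0, p)) :=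
    tendsto_id.prodMk_nhds tendsto_const_nhds
  refine (eventually_eq_zero_or_of_mul (F := fun z => fderiv ℂ q (z, p) (0, v)) ?_ ?_
    ((hslice.eventually hkeyp).mono fun z hz => hz v hv)).resolve_left (mt (hp v) hv0)
  · exact AnalyticAt.comp (f := fun z : E => (z, p)) (analyticAt_fderiv_apply_const hqp _)
      (by fun_prop)
  · exact hDp.comp (f := fun z : E => (z, p)) (by fun_prop)

theorem iteratedFDeriv_eq_zero_of_degenerate [CompleteSpace G]
    [FiniteDimensional ℂ F] {q : E × F → ℂ} (hq : AnalyticAt ℂ q 0) (hq0 : q 0 = 0)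
    (hsep : ∃ᶠ p in 𝓝 (0 : F), Separating q p) {h : F → G} (hh : AnalyticAt ℂ h 0)
    (h0 : h 0 = 0) (hdeg : ∀ᶠ p in 𝓝 (0 : F), ∃ v ≠ 0, fderiv ℂ h p v = 0)
    {Ψ : (E × ℂ) × G → ℂ} (hΨ : AnalyticAt ℂ Ψ 0)
    (hzero : ∀ᶠ x in 𝓝 (0 : E × F), Ψ ((x.1, q x), h x.2) = 0) (k : ℕ) :
    ∀ᶠ x in 𝓝 (0 : E × F),
      iteratedFDeriv ℂ k Ψ ((x.1, q x), h x.2) (fun _ => ((0, 1), 0)) = 0 := by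
  have hh' : AnalyticAt ℂ h (0 : E × F).2 := hh
  set γ : E × F → (E × ℂ) × G := fun x => ((x.1, q x), h x.2) with hγdef
  have hγ : ContinuousAt γ 0 := by fun_prop
  have hγ0 : γ 0 = 0 := by
    simp only [hγdef, Prod.fst_zero, Prod.snd_zero, hq0, h0, Prod.mk_zero_zero]
  induction k with
  | zero => simpa only [iteratedFDeriv_zero_apply] using hzero
  | succ k ih =>
    have hk : AnalyticAt ℂ (fun y => iteratedFDeriv ℂ k Ψ y fun _ => ((0, 1), 0)) 0 :=
      ((ContinuousMultilinearMap.apply ℂ (fun _ : Fin k => (E × ℂ) × G) ℂ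
        fun _ => ((0, 1), 0)).analyticAt _).comp (analyticAt_iteratedFDeriv hΨ k)
    filter_upwards [fderiv_eq_zero_of_degenerate hq hq0 hsep hh h0 hdeg hk ih,
      hγ.eventually (hγ0.symm ▸ hΨ.eventually_analyticAt)] with x hx hΨx
    exact ((analyticAt_iteratedFDeriv hΨx k).differentiableAt.iteratedFDeriv_succ_apply_left'
      (m := fun _ => ((0, 1), 0))).trans hx

theorem eventually_eq_zero_of_degenerate [CompleteSpace E] [CompleteSpace G]
    [FiniteDimensional ℂ F] {q : E × F → ℂ} (hq : AnalyticAt ℂ q 0) (hq0 : q 0 = 0)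
    (hsep : ∃ᶠ p in 𝓝 (0 : F), Separating q p) {h : F → G} (hh : AnalyticAt ℂ h 0)
    (h0 : h 0 = 0) (hdeg : ∀ᶠ p in 𝓝 (0 : F), ∃ v ≠ 0, fderiv ℂ h p v = 0)
    {Ψ : (E × ℂ) × G → ℂ} (hΨ : AnalyticAt ℂ Ψ 0)
    (hzero : ∀ᶠ x in 𝓝 (0 : E × F), Ψ ((x.1, q x), h x.2) = 0) :
    ∀ᶠ y in 𝓝 (0 : (E × ℂ) × F), Ψ (y.1, h y.2) = 0 := by
  have hh' : AnalyticAt ℂ h (0 : E × F).2 := hh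
  set γ : E × F → (E × ℂ) × G := fun x => ((x.1, q x), h x.2) with hγdef
  have hγ : AnalyticAt ℂ γ 0 := by fun_prop
  have hγ0 : γ 0 = 0 := by
    simp only [hγdef, Prod.fst_zero, Prod.snd_zero, hq0, h0, Prod.mk_zero_zero]
  have hline := eventually_eq_zero_along_of_iteratedFDeriv_eq_zero hγ (hγ0.symm ▸ hΨ)
    ((0, 1), 0) (iteratedFDeriv_eq_zero_of_degenerate hq hq0 hsep hh h0 hdeg hΨ hzero)
  have hq' : AnalyticAt ℂ q ((0 : (E × ℂ) × F).1.1, (0 : (E × ℂ) × F).2) := hq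
  have htend : Tendsto (fun y : (E × ℂ) × F => ((y.1.1, y.2), y.1.2 - q (y.1.1, y.2)))
      (𝓝 0) (𝓝 (0, 0)) := by
    have hc : ContinuousAt (fun y : (E × ℂ) × F => ((y.1.1, y.2), y.1.2 - q (y.1.1, y.2))) 0 := by
      have : ContinuousAt (fun y : (E × ℂ) × F => q (y.1.1, y.2)) 0 :=
        ContinuousAt.comp (f := fun y : (E × ℂ) × F => (y.1.1, y.2)) hq'.continuousAt (by fun_prop)
      fun_prop
    simpa [ContinuousAt, hq0, ← Prod.zero_eq_mk] using hc
  filter_upwards [htend.eventually hline] with y hy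
  simpa [hγdef] using hy

end Separating

section IteratedDerivatives

variable {X Y : Type*} [NormedAddCommGroup X] [NormedSpace ℂ X]
  [NormedAddCommGroup Y] [NormedSpace ℂ Y]

/-- The iterated directional derivative of `F` along the vectors of a list, the last of which is
applied first. -/
noncomputable def iterDirDeriv (l : List X) (F : X → ℂ) : X → ℂ :=
  l.foldr (fun e G x => fderiv ℂ G x e) F

theorem iterDirDeriv_cons (e : X) (l : List X) (F : X → ℂ) :
    iterDirDeriv (e :: l) F = fun x => fderiv ℂ (iterDirDeriv l F) x e := rfl

theorem iterDirDeriv_append (l l' : List X) (F : X → ℂ) :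
    iterDirDeriv (l ++ l') F = iterDirDeriv l (iterDirDeriv l' F) := List.foldr_append

theorem iterDirDeriv_zero (l : List X) : iterDirDeriv l (fun _ => (0 : ℂ)) = fun _ => 0 := by
  induction l with
  | nil => rfl
  | cons e l ih => simp only [iterDirDeriv_cons, ih, fderiv_const_apply, zero_apply]

theorem iterDirDeriv_congr (l : List X) {F G : X → ℂ} {x : X} (h : F =ᶠ[𝓝 x] G) :
    iterDirDeriv l F =ᶠ[𝓝 x] iterDirDeriv l G := by
  induction l with
  | nil => exact h
  | cons e l ih => exact ih.fderiv.fun_comp (· e)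

theorem analyticAt_iterDirDeriv (l : List X) {F : X → ℂ} {x : X} (hF : AnalyticAt ℂ F x) :
    AnalyticAt ℂ (iterDirDeriv l F) x := by
  induction l with
  | nil => exact hF
  | cons e l ih => exact analyticAt_fderiv_apply_const ih e

theorem fderiv_fderiv_apply_comm {F : X → ℂ} {x : X} (hF : AnalyticAt ℂ F x) (u v : X) :
    fderiv ℂ (fun y => fderiv ℂ F y u) x v = fderiv ℂ (fun y => fderiv ℂ F y v) x u := by
  have happly : ∀ u v, fderiv ℂ (fun y => fderiv ℂ F y u) x v = fderiv ℂ (fderiv ℂ F) x v u := by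
    intro u v
    rw [fderiv_clm_apply hF.fderiv.differentiableAt (by fun_prop)]
    simp
  rw [happly, happly, hF.contDiffAt.isSymmSndFDerivAt_of_omega.eq]

theorem iterDirDeriv_perm {l l' : List X} (h : l.Perm l') {F : X → ℂ} {x : X}
    (hF : AnalyticAt ℂ F x) : iterDirDeriv l F =ᶠ[𝓝 x] iterDirDeriv l' F := by
  induction h with
  | nil => rfl
  | cons e _ ih => exact ih.fderiv.fun_comp (· e)
  | swap u v l =>
    filter_upwards [hF.eventually_analyticAt] with y hy
    exact fderiv_fderiv_apply_comm (analyticAt_iterDirDeriv l hy) u v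
  | trans _ _ ih ih' => exact ih.trans ih'

theorem fderiv_iterDirDeriv_apply (l : List X) {F : X → ℂ} {x : X} (hF : AnalyticAt ℂ F x) (v : X) :
    fderiv ℂ (iterDirDeriv l F) x v = iterDirDeriv l (fun y => fderiv ℂ F y v) x := by
  have h := (iterDirDeriv_perm (List.perm_append_singleton v l) hF).self_of_nhds
  rw [iterDirDeriv_append] at h
  exact h.symm

theorem iteratedFDeriv_apply_eq_iterDirDeriv {F : X → ℂ} {x : X} (hF : AnalyticAt ℂ F x) {k : ℕ}
    (v : Fin k → X) : iteratedFDeriv ℂ k F x v = iterDirDeriv (List.ofFn v) F x := by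
  induction k generalizing x with
  | zero => simp [iterDirDeriv]
  | succ k ih =>
    have hnhds : (fun y => iteratedFDeriv ℂ k F y (Fin.tail v)) =ᶠ[𝓝 x]
        iterDirDeriv (List.ofFn (Fin.tail v)) F :=
      hF.eventually_analyticAt.mono fun y hy => ih hy (Fin.tail v)
    rw [(analyticAt_iteratedFDeriv hF k).differentiableAt.iteratedFDeriv_succ_apply_left',
      hnhds.fderiv_eq, List.ofFn_succ, iterDirDeriv_cons]
    rfl

theorem iterDirDeriv_slice (l : List X) {q : X × Y → ℂ} {x : X × Y} (hq : AnalyticAt ℂ q x) :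
    iterDirDeriv l (fun z => q (z, x.2)) x.1 = iterDirDeriv (l.map fun e => (e, 0)) q x := by
  obtain ⟨x, y⟩ := x
  induction l generalizing x with
  | nil => rfl
  | cons e l ih =>
    have hslice : Tendsto (fun z : X => (z, y)) (𝓝 x) (𝓝 (x, y)) :=
      tendsto_id.prodMk_nhds tendsto_const_nhds
    have hnhds : iterDirDeriv l (fun z => q (z, y)) =ᶠ[𝓝 x]
        fun z => iterDirDeriv (l.map fun e => (e, 0)) q (z, y) :=
      (hslice.eventually hq.eventually_analyticAt).mono fun z hz => ih z hz
    have hcomp := (analyticAt_iterDirDeriv (l.map fun e => (e, (0 : Y))) hq).differentiableAt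
      |>.hasFDerivAt.comp (f := fun z : X => (z, y)) x (hasFDerivAt_prodMk_left x y)
    calc fderiv ℂ (iterDirDeriv l fun z => q (z, y)) x e
        = (fderiv ℂ (iterDirDeriv (l.map fun e => (e, 0)) q) (x, y)).comp
            (ContinuousLinearMap.inl ℂ X Y) e :=
          DFunLike.congr_fun (hnhds.fderiv_eq.trans hcomp.fderiv) e

theorem eventually_eq_zero_of_iterDirDeriv_basis {ι : Type*} (b : Module.Basis ι ℂ X) {F : X → ℂ}
    {x : X} (hF : AnalyticAt ℂ F x) (h : ∀ l : List ι, iterDirDeriv (l.map b) F x = 0) :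
    ∀ᶠ y in 𝓝 x, F y = 0 := by
  refine eventually_eq_zero_of_iteratedFDeriv_eq_zero hF fun k => ?_
  refine ContinuousMultilinearMap.toMultilinearMap_injective ?_
  refine Module.Basis.ext_multilinear (fun _ => b) fun v => ?_
  have hv := h (List.ofFn v)
  rwa [List.map_ofFn, ← iteratedFDeriv_apply_eq_iterDirDeriv hF] at hv

end IteratedDerivatives

section MultiIndex

variable {Y : Type*} [NormedAddCommGroup Y] [NormedSpace ℂ Y]

/-- The list of standard basis vectors along which `∂^α` differentiates. -/
def multiIndexList (α : Fin n → ℕ) : List (Fin n) :=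
  (List.finRange n).flatMap fun i => List.replicate (α i) i

theorem count_multiIndexList (α : Fin n → ℕ) (i : Fin n) : (multiIndexList α).count i = α i := by
  simp [multiIndexList, List.count_flatMap, List.count_replicate, Function.comp_def,
    ← List.ofFn_eq_map, List.sum_ofFn]

theorem mpd_eq_iterDirDeriv (α : Fin n → ℕ) (F : (Fin n → ℂ) → ℂ) :
    mpd α F = iterDirDeriv ((multiIndexList α).map (Pi.basisFun ℂ (Fin n))) F := by
  have hpow : ∀ i k G, (pd i)^[k] G =
      iterDirDeriv (List.replicate k (Pi.basisFun ℂ (Fin n) i)) G := by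
    intro i k G
    induction k with
    | zero => rfl
    | succ k ih =>
      rw [Function.iterate_succ_apply', ih, List.replicate_succ, iterDirDeriv_cons,
        Pi.basisFun_apply]
      rfl
  rw [mpd, multiIndexList, List.ofFn_eq_map]
  induction List.finRange n with
  | nil => rfl
  | cons i l ih =>
    rw [List.map_cons, List.foldr_cons, Function.comp_apply, ih, hpow, List.flatMap_cons,
      List.map_append, List.map_replicate, iterDirDeriv_append]

theorem eventually_eq_zero_of_mpd_eq_zero {F : (Fin n → ℂ) → ℂ} {x : Fin n → ℂ}
    (hF : AnalyticAt ℂ F x) (h : ∀ α, mpd α F x = 0) : ∀ᶠ y in 𝓝 x, F y = 0 := by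
  refine eventually_eq_zero_of_iterDirDeriv_basis (Pi.basisFun ℂ (Fin n)) hF fun l => ?_
  have hperm : l.Perm (multiIndexList fun i => l.count i) :=
    List.perm_iff_count.2 fun i => (count_multiIndexList (fun i => l.count i) i).symm
  rw [(iterDirDeriv_perm (hperm.map _) hF).self_of_nhds, ← mpd_eq_iterDirDeriv, h]

theorem mpd_slice_eventuallyEq (α : Fin n → ℕ) {q : (Fin n → ℂ) × Y → ℂ} {x : (Fin n → ℂ) × Y}
    (hq : AnalyticAt ℂ q x) :
    (fun y => mpd α (fun z => q (z, y)) x.1) =ᶠ[𝓝 x.2] fun y =>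
      iterDirDeriv (((multiIndexList α).map (Pi.basisFun ℂ (Fin n))).map fun e => (e, 0)) q
        (x.1, y) := by
  have hslice : Tendsto (fun y : Y => (x.1, y)) (𝓝 x.2) (𝓝 x) :=
    tendsto_const_nhds.prodMk_nhds tendsto_id
  filter_upwards [hslice.eventually hq.eventually_analyticAt] with y hy
  rw [mpd_eq_iterDirDeriv]
  exact iterDirDeriv_slice _ hy

theorem analyticAt_mpd_slice (α : Fin n → ℕ) {q : (Fin n → ℂ) × Y → ℂ} {x : (Fin n → ℂ) × Y}
    (hq : AnalyticAt ℂ q x) : AnalyticAt ℂ (fun y => mpd α (fun z => q (z, y)) x.1) x.2 :=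
  ((analyticAt_iterDirDeriv _ hq).comp (f := fun y => (x.1, y)) (by fun_prop)).congr
    (mpd_slice_eventuallyEq α hq).symm

theorem fderiv_mpd_slice_apply (α : Fin n → ℕ) {q : (Fin n → ℂ) × Y → ℂ} {x : (Fin n → ℂ) × Y}
    (hq : AnalyticAt ℂ q x) (v : Y) :
    fderiv ℂ (fun y => mpd α (fun z => q (z, y)) x.1) x.2 v =
      mpd α (fun z => fderiv ℂ q (z, x.2) (0, v)) x.1 := by
  have hcomp := (analyticAt_iterDirDeriv
    (((multiIndexList α).map (Pi.basisFun ℂ (Fin n))).map fun e => (e, (0 : Y))) hq)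
      |>.differentiableAt.hasFDerivAt.comp (f := fun y : Y => (x.1, y)) x.2
      (hasFDerivAt_prodMk_right x.1 x.2)
  rw [(mpd_slice_eventuallyEq α hq).fderiv_eq, mpd_eq_iterDirDeriv,
    iterDirDeriv_slice _ (analyticAt_fderiv_apply_const hq ((0 : Fin n → ℂ), v)),
    ← fderiv_iterDirDeriv_apply _ hq]
  exact DFunLike.congr_fun hcomp.fderiv v

theorem separating_iff_forall_mpd {q : (Fin n → ℂ) × Y → ℂ} {p : Y} (hq : AnalyticAt ℂ q (0, p)) :
    Separating q p ↔
      ∀ v, (∀ α, fderiv ℂ (fun y => mpd α (fun z => q (z, y)) 0) p v = 0) → v = 0 := by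
  refine forall_congr' fun v => imp_congr_left ?_
  simp only [fderiv_mpd_slice_apply (x := (0, p)) _ hq v]
  refine ⟨fun h α => ?_, eventually_eq_zero_of_mpd_eq_zero
    ((analyticAt_fderiv_apply_const hq (0, v)).comp (f := fun z => (z, p)) (by fun_prop))⟩
  rw [mpd_eq_iterDirDeriv, (iterDirDeriv_congr _ h).self_of_nhds, iterDirDeriv_zero]

theorem exists_det_ne_zero_of_forall_dotProduct {K ι : Type*} [Field K] {R : ι → Fin n → K}
    (h : ∀ v, (∀ a, R a ⬝ᵥ v = 0) → v = 0) :
    ∃ A : Fin n → ι, (Matrix.of fun j => R (A j)).det ≠ 0 := by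
  have hspan : Submodule.span K (Set.range R) = ⊤ := by
    by_contra hlt
    obtain ⟨φ, hφ, hker⟩ := Submodule.exists_le_ker_of_lt_top _ (lt_top_iff_ne_top.2 hlt)
    obtain ⟨v, rfl⟩ := (dotProductEquiv K (Fin n)).surjective φ
    refine hφ ((LinearEquiv.map_eq_zero_iff _).2 (h v fun a => ?_))
    rw [dotProduct_comm]
    exact hker (Submodule.subset_span ⟨a, rfl⟩)
  obtain ⟨e, he, -, hli⟩ := Submodule.exists_fun_fin_finrank_span_eq K (Set.range R)
  have hfinrank : Module.finrank K (Submodule.span K (Set.range R)) = n := by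
    rw [hspan, finrank_top, Module.finrank_fin_fun]
  choose a ha using he
  refine ⟨fun j => a (finCongr hfinrank.symm j), ((Matrix.isUnit_iff_isUnit_det _).1
    (Matrix.linearIndependent_rows_iff_isUnit.1 ?_)).ne_zero⟩
  have hrows : (fun j => R (a (finCongr hfinrank.symm j))) = e ∘ finCongr hfinrank.symm :=
    funext fun j => ha _
  exact hrows ▸ hli.comp _ (finCongr hfinrank.symm).injective

theorem analyticAt_det {ι : Type*} [Fintype ι] [DecidableEq ι] {A : Y → Matrix ι ι ℂ} {y : Y}
    (hA : ∀ i j, AnalyticAt ℂ (fun y => A y i j) y) : AnalyticAt ℂ (fun y => (A y).det) y := by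
  simp only [Matrix.det_apply]
  exact Finset.analyticAt_fun_sum _ fun σ _ =>
    (Finset.analyticAt_fun_prod _ fun i _ => hA (σ i) i).const_smul

theorem classC_iff_frequently_separating {Q : (Fin n → ℂ) → (Fin n → ℂ) → ℂ → ℂ}
    (hQ : AnalyticAt ℂ (fun x : (Fin n → ℂ) × (Fin n → ℂ) => Q x.1 x.2 0) 0) :
    ClassC Q ↔ ∃ᶠ χ in 𝓝 0,
      Separating (fun x : (Fin n → ℂ) × (Fin n → ℂ) => Q x.1 x.2 0) χ := by
  set R : (Fin n → ℕ) → (Fin n → ℂ) → Fin n → ℂ :=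
    fun α χ k => pd k (fun χ' => mpd α (fun z => Q z χ' 0) 0) χ with hR
  have hrow : ∀ α χ v, R α χ ⬝ᵥ v = fderiv ℂ (fun χ' => mpd α (fun z => Q z χ' 0) 0) χ v := by
    intro α χ v
    conv_rhs => rw [pi_eq_sum_univ' v, map_sum]
    simp only [dotProduct, hR, pd, map_smul, smul_eq_mul, mul_comm]
  have hsep : ∀ᶠ χ in 𝓝 0, Separating (fun x : (Fin n → ℂ) × (Fin n → ℂ) => Q x.1 x.2 0) χ ↔
      ∀ v, (∀ α, R α χ ⬝ᵥ v = 0) → v = 0 := by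
    filter_upwards [tendsto_prodMk_zero_left.eventually hQ.eventually_analyticAt] with χ hχ
    simp only [separating_iff_forall_mpd hχ, hrow]
  have hRan : ∀ᶠ χ in 𝓝 (0 : Fin n → ℂ), ∀ A : Fin n → Fin n → ℕ,
      AnalyticAt ℂ (fun χ => (Matrix.of fun j => R (A j) χ).det) χ := by
    filter_upwards [tendsto_prodMk_zero_left.eventually hQ.eventually_analyticAt] with χ hχ A
    exact analyticAt_det fun j k =>
      analyticAt_fderiv_apply_const (analyticAt_mpd_slice (A j) (x := (0, χ)) hχ) _
  constructor
  · rintro ⟨-, A, -, hA⟩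
    refine ((not_eventually.1 hA).and_eventually hsep).mono fun χ hχ => hχ.2.2 fun v hv => ?_
    by_contra hv0
    exact hχ.1 (Matrix.exists_mulVec_eq_zero_iff.1 ⟨v, hv0, funext fun j => hv (A j)⟩)
  · intro hfreq
    by_contra hC
    have hdet : ∀ᶠ χ in 𝓝 (0 : Fin n → ℂ), ∀ A : Fin n → Fin n → ℕ,
        (Matrix.of fun j => R (A j) χ).det = 0 :=
      eventually_forall_eq_zero hRan fun A => by
        by_contra hA
        exact hC ⟨∑ j, ∑ i, A j i, A, fun j => Finset.single_le_sum
          (f := fun j => ∑ i, A j i) (fun _ _ => Nat.zero_le _) (Finset.mem_univ j), hA⟩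
    obtain ⟨χ, hχ, hχsep, hχdet⟩ := (hfreq.and_eventually (hsep.and hdet)).exists
    obtain ⟨A, hA⟩ := exists_det_ne_zero_of_forall_dotProduct (hχsep.1 hχ)
    exact hA (hχdet A)

end MultiIndex

section SegrePair

variable {E X Y : Type*} [NormedAddCommGroup E] [NormedSpace ℂ E]
  [NormedAddCommGroup X] [NormedSpace ℂ X] [NormedAddCommGroup Y] [NormedSpace ℂ Y]

theorem exists_analyticAt_localInverse [CompleteSpace X] {G : X → Y} {x : X}
    {e : X ≃L[ℂ] Y} (hG : AnalyticAt ℂ G x) (hGd : HasFDerivAt G (e : X →L[ℂ] Y) x) :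
    ∃ I : Y → X, AnalyticAt ℂ I (G x) ∧ (∀ᶠ y in 𝓝 x, I (G y) = y) ∧
      ∀ᶠ y in 𝓝 (G x), G (I y) = y := by
  have hstrict : HasStrictFDerivAt G (e : X →L[ℂ] Y) x := hGd.fderiv ▸ hG.hasStrictFDerivAt
  exact ⟨hstrict.localInverse G e x, (hstrict.toOpenPartialHomeomorph G).analyticAt_symm'
    hstrict.mem_toOpenPartialHomeomorph_source hG hGd.fderiv, hstrict.eventually_left_inverse,
    hstrict.eventually_right_inverse⟩

/-- The notion `IsNormalDF` for an uncurried defining function `Q (z, χ, τ)` on an arbitrary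
complex normed space. -/
structure IsNormal (Q : E × E × ℂ → ℂ) : Prop where
  analyticAt : AnalyticAt ℂ Q 0
  apply_zero_left : ∀ᶠ y in 𝓝 (0 : E × ℂ), Q (0, y) = y.2
  apply_zero_right : ∀ᶠ x in 𝓝 (0 : E × ℂ), Q (x.1, 0, x.2) = x.2

/-- The two equations `w = Q (z, χ, τ)` and `τ = P (χ, z, w)` of one complexified hypersurface in
normal coordinates. When the hypersurface is real, `P` is the conjugate of `Q`. -/
structure SegrePair (Q P : E × E × ℂ → ℂ) : Prop where
  left : IsNormal Q
  right : IsNormal P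
  comp : ∀ᶠ x in 𝓝 (0 : E × E × ℂ), Q (x.1, x.2.1, P (x.2.1, x.1, x.2.2)) = x.2.2
  comp' : ∀ᶠ x in 𝓝 (0 : E × E × ℂ), P (x.1, x.2.1, Q (x.2.1, x.1, x.2.2)) = x.2.2

theorem SegrePair.symm {Q P : E × E × ℂ → ℂ} (h : SegrePair Q P) : SegrePair P Q :=
  ⟨h.right, h.left, h.comp', h.comp⟩

theorem IsNormalDF.isNormal {Q : (Fin n → ℂ) → (Fin n → ℂ) → ℂ → ℂ} (hQ : IsNormalDF Q) :
    IsNormal fun x : (Fin n → ℂ) × (Fin n → ℂ) × ℂ => Q x.1 x.2.1 x.2.2 where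
  analyticAt := hQ.1.self_of_nhds
  apply_zero_left := (tendsto_prodMk_zero_left.eventually hQ.2).mono fun _ hx => hx.1
  apply_zero_right := by
    have hincl : Tendsto (fun x : (Fin n → ℂ) × ℂ => (x.1, (0 : Fin n → ℂ), x.2)) (𝓝 0) (𝓝 0) :=
      Continuous.tendsto' (by fun_prop) 0 0 rfl
    exact (hincl.eventually hQ.2).mono fun _ hx => hx.2

namespace IsNormal

variable {Q : E × E × ℂ → ℂ}

theorem apply_zero (hQ : IsNormal Q) : Q 0 = 0 := hQ.apply_zero_left.self_of_nhds

theorem fderiv_zero_left_apply (hQ : IsNormal Q) :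
    ∀ᶠ y in 𝓝 (0 : E × ℂ), ∀ v, fderiv ℂ Q (0, y) (0, v) = v.2 := by
  filter_upwards [hQ.apply_zero_left.eventually_nhds,
    tendsto_prodMk_zero_left.eventually hQ.analyticAt.eventually_analyticAt] with y hy hQy v
  have hcomp := hQy.differentiableAt.hasFDerivAt.comp (f := fun y : E × ℂ => ((0 : E), y)) y
    (hasFDerivAt_prodMk_right 0 y)
  have hsnd : HasFDerivAt (Q ∘ fun y : E × ℂ => ((0 : E), y)) (ContinuousLinearMap.snd ℂ E ℂ) y :=
    hasFDerivAt_snd.congr_of_eventuallyEq hy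
  exact DFunLike.congr_fun (hcomp.unique hsnd) v

theorem fderiv_zero_apply (hQ : IsNormal Q) (v : E × E × ℂ) : fderiv ℂ Q 0 v = v.2.2 := by
  have hincl : HasFDerivAt (fun z : E => (z, (0 : E × ℂ))) (.inl ℂ E (E × ℂ)) 0 :=
    hasFDerivAt_prodMk_left 0 0
  have hcomp : HasFDerivAt (fun z : E => Q (z, 0)) _ 0 :=
    hQ.analyticAt.differentiableAt.hasFDerivAt.comp (f := fun z : E => (z, (0 : E × ℂ))) 0 hincl
  have hconst : HasFDerivAt (fun z : E => Q (z, 0)) (0 : E →L[ℂ] ℂ) 0 :=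
    (hasFDerivAt_const 0 0).congr_of_eventuallyEq
      (tendsto_prodMk_zero_right.eventually hQ.apply_zero_right)
  have hz : fderiv ℂ Q 0 (v.1, 0) = 0 := DFunLike.congr_fun (hcomp.unique hconst) v.1
  have hχτ : fderiv ℂ Q 0 (0, v.2) = v.2.2 := hQ.fderiv_zero_left_apply.self_of_nhds v.2
  rw [← Prod.fst_add_snd v, map_add, hz, hχτ, zero_add]
  simp

theorem analyticAt_slice (hQ : IsNormal Q) :
    AnalyticAt ℂ (fun x : E × E => Q (x.1, x.2, 0)) 0 :=
  hQ.analyticAt.comp_of_eq (f := fun x : E × E => (x.1, x.2, (0 : ℂ))) (by fun_prop) rfl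

theorem exists_segrePair [CompleteSpace E] (hQ : IsNormal Q) : ∃ P, SegrePair Q P := by
  set G : E × E × ℂ → E × E × ℂ := fun x => (x.1, x.2.1, Q x) with hG
  have hGan : AnalyticAt ℂ G 0 := by
    have := hQ.analyticAt
    fun_prop
  have hG0 : G 0 = 0 := by simp only [hG, hQ.apply_zero]; rfl
  have hfst : HasFDerivAt (fun x : E × E × ℂ => x.2.1)
      ((ContinuousLinearMap.fst ℂ E ℂ).comp (ContinuousLinearMap.snd ℂ E (E × ℂ))) 0 :=
    ((ContinuousLinearMap.fst ℂ E ℂ).comp (ContinuousLinearMap.snd ℂ E (E × ℂ))).hasFDerivAt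
  have hGd : HasFDerivAt G (ContinuousLinearEquiv.refl ℂ (E × E × ℂ) : _ →L[ℂ] _) 0 := by
    refine (hasFDerivAt_fst.prodMk
      (hfst.prodMk hQ.analyticAt.differentiableAt.hasFDerivAt)).congr_fderiv ?_
    ext v <;> simp [hQ.fderiv_zero_apply]
  obtain ⟨I, hI, hIG, hGI⟩ := exists_analyticAt_localInverse hGan hGd
  rw [hG0] at hI hGI
  have hswap : AnalyticAt ℂ (fun x : E × E × ℂ => (x.2.1, x.1, x.2.2)) 0 := by fun_prop
  have hcomp : ∀ᶠ x in 𝓝 (0 : E × E × ℂ), Q (x.1, x.2.1, (I x).2.2) = x.2.2 := by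
    filter_upwards [hGI] with x hx
    simp only [hG, Prod.ext_iff] at hx
    rw [← hx.1, ← hx.2.1]
    exact hx.2.2
  have hcomp' : ∀ᶠ x in 𝓝 (0 : E × E × ℂ), (I (x.2.1, x.1, Q (x.2.1, x.1, x.2.2))).2.2 = x.2.2 :=
    (hswap.continuousAt.eventually hIG).mono fun x hx => congrArg (fun y => y.2.2) hx
  refine ⟨fun x => (I (x.2.1, x.1, x.2.2)).2.2, hQ, ⟨?_, ?_, ?_⟩, hcomp, hcomp'⟩
  · have := hI.comp (f := fun x : E × E × ℂ => (x.2.1, x.1, x.2.2)) hswap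
    exact analyticAt_snd.comp (analyticAt_snd.comp this)
  · filter_upwards [tendsto_prodMk_zero_left.eventually hcomp', hQ.apply_zero_right] with x hx hQx
    rwa [hQx] at hx
  · have hincl : Tendsto (fun x : E × ℂ => (x.1, (0 : E), x.2)) (𝓝 0) (𝓝 0) :=
      Continuous.tendsto' (by fun_prop) 0 0 rfl
    filter_upwards [hincl.eventually hcomp', hQ.apply_zero_left] with x hx hQx
    rwa [hQx] at hx

theorem fderiv_slice_apply (hQ : IsNormal Q) : ∀ᶠ x in 𝓝 (0 : E × E), ∀ v,
    fderiv ℂ (fun x : E × E => Q (x.1, x.2, 0)) x v = fderiv ℂ Q (x.1, x.2, 0) (v.1, v.2, 0) := by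
  have hslice : Tendsto (fun x : E × E => (x.1, x.2, (0 : ℂ))) (𝓝 0) (𝓝 0) :=
    Continuous.tendsto' (by fun_prop) 0 0 rfl
  filter_upwards [hslice.eventually hQ.analyticAt.eventually_analyticAt] with x hx v
  exact DFunLike.congr_fun (hx.differentiableAt.hasFDerivAt.comp
    (f := fun x : E × E => (x.1, x.2, (0 : ℂ))) x
    (hasFDerivAt_fst.prodMk (hasFDerivAt_snd.prodMk (hasFDerivAt_const 0 _)))).fderiv v

theorem separating_of_separating_slice (hQ : IsNormal Q) :
    ∀ᶠ χ in 𝓝 (0 : E), Separating (fun x : E × E => Q (x.1, x.2, 0)) χ → Separating Q (χ, 0) := by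
  filter_upwards [tendsto_prodMk_zero_right.eventually hQ.fderiv_zero_left_apply,
    tendsto_prodMk_zero_left.eventually hQ.fderiv_slice_apply.eventually_nhds]
    with χ hnormal hslice hsep v hv
  have hv2 : v.2 = 0 := (hnormal v).symm.trans hv.self_of_nhds
  refine Prod.ext (hsep v.1 ?_) hv2
  have hincl' : Tendsto (fun z : E => (z, χ)) (𝓝 0) (𝓝 (0, χ)) :=
    tendsto_id.prodMk_nhds tendsto_const_nhds
  filter_upwards [hv, hincl'.eventually hslice] with z hz hQz
  rw [← Prod.mk.eta (p := v), hv2] at hz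
  exact (hQz (0, v.1)).trans hz

theorem frequently_separating_of_slice (hQ : IsNormal Q)
    (h : ∃ᶠ χ in 𝓝 (0 : E), Separating (fun x : E × E => Q (x.1, x.2, 0)) χ) :
    ∃ᶠ p in 𝓝 (0 : E × ℂ), Separating Q p :=
  tendsto_prodMk_zero_right.frequently
    ((h.and_eventually hQ.separating_of_separating_slice).mono fun _ hχ => hχ.2 hχ.1)

end IsNormal

theorem Separating.congr {q q' : X × Y → ℂ} {p : Y} (hsep : Separating q p)
    (h : q =ᶠ[𝓝 (0, p)] q') : Separating q' p := by
  intro v hv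
  have hslice : Tendsto (fun z : X => (z, p)) (𝓝 0) (𝓝 (0, p)) :=
    tendsto_id.prodMk_nhds tendsto_const_nhds
  refine hsep v ?_
  filter_upwards [hv, hslice.eventually (h.fderiv (𝕜 := ℂ))] with z hz hqz
  rwa [hqz]

theorem Separating.star_star [StarAddMonoid X] [NormedStarGroup X] [StarModule ℂ X]
    [StarAddMonoid Y] [NormedStarGroup Y] [StarModule ℂ Y] {q : X × Y → ℂ} {p : Y}
    (hq : AnalyticAt ℂ q (0, p)) (hsep : Separating q p) :
    Separating (star ∘ q ∘ (star : X × Y → X × Y)) (star p) := by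
  intro v hv
  have hslice : Tendsto (fun z : X => (z, p)) (𝓝 0) (𝓝 (0, p)) :=
    tendsto_id.prodMk_nhds tendsto_const_nhds
  have hstar : Tendsto (star : X → X) (𝓝 0) (𝓝 0) := continuous_star.tendsto' 0 0 (star_zero X)
  rw [← star_eq_zero]
  refine hsep (star v) ?_
  filter_upwards [hslice.eventually hq.eventually_analyticAt, hstar.eventually hv] with z hqz hz
  change fderiv ℂ (star ∘ q ∘ star) (star (z, p)) (0, v) = 0 at hz
  rw [hqz.differentiableAt.hasFDerivAt.star_star.fderiv] at hz
  simpa [Prod.star_def] using hz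

theorem SegrePair.eventuallyEq_of_comp {Q P R : E × E × ℂ → ℂ} (h : SegrePair Q P)
    (hR : ContinuousAt R 0) (hR0 : R 0 = 0)
    (hQR : ∀ᶠ x in 𝓝 (0 : E × E × ℂ), Q (x.1, x.2.1, R (x.2.1, x.1, x.2.2)) = x.2.2) :
    R =ᶠ[𝓝 0] P := by
  have hswap : Tendsto (fun x : E × E × ℂ => (x.2.1, x.1, x.2.2)) (𝓝 0) (𝓝 0) :=
    Continuous.tendsto' (by fun_prop) 0 0 rfl
  have hgraph : Tendsto (fun x : E × E × ℂ => (x.1, x.2.1, R x)) (𝓝 0) (𝓝 0) := by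
    have : ContinuousAt (fun x : E × E × ℂ => (x.1, x.2.1, R x)) 0 := by fun_prop
    simpa only [ContinuousAt, hR0, Prod.fst_zero, Prod.snd_zero, Prod.mk_zero_zero] using this
  filter_upwards [hswap.eventually hQR, hgraph.eventually h.comp'] with x hx hPx
  rwa [hx, eq_comm] at hPx

theorem IsRealNormalDF.eventuallyEq_star_star {Q : (Fin n → ℂ) → (Fin n → ℂ) → ℂ → ℂ}
    (hQ : IsRealNormalDF Q) {P : (Fin n → ℂ) × (Fin n → ℂ) × ℂ → ℂ}
    (hP : SegrePair (fun x => Q x.1 x.2.1 x.2.2) P) :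
    star ∘ (fun x => Q x.1 x.2.1 x.2.2) ∘ star =ᶠ[𝓝 0] P := by
  refine hP.eventuallyEq_of_comp ?_ ?_ hQ.2
  · have hcont : ContinuousAt (fun x : (Fin n → ℂ) × (Fin n → ℂ) × ℂ => Q x.1 x.2.1 x.2.2)
        (star 0) := by
      rw [star_zero]
      exact hP.left.analyticAt.continuousAt
    exact continuous_star.continuousAt.comp (hcont.comp continuous_star.continuousAt)
  · simpa using hP.left.apply_zero

theorem IsRealNormalDF.frequently_separating {Q : (Fin n → ℂ) → (Fin n → ℂ) → ℂ → ℂ}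
    (hQ : IsRealNormalDF Q) (hM : ClassC Q) {P : (Fin n → ℂ) × (Fin n → ℂ) × ℂ → ℂ}
    (hP : SegrePair (fun x => Q x.1 x.2.1 x.2.2) P) :
    (∃ᶠ χ in 𝓝 (0 : Fin n → ℂ),
      Separating (fun x : (Fin n → ℂ) × (Fin n → ℂ) => Q x.1 x.2 0) χ) ∧
    ∃ᶠ χ in 𝓝 (0 : Fin n → ℂ),
      Separating (fun x : (Fin n → ℂ) × (Fin n → ℂ) => P (x.1, x.2, 0)) χ := by
  have hslice := (classC_iff_frequently_separating hP.left.analyticAt_slice).1 hM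
  refine ⟨hslice, ?_⟩
  have hincl : Tendsto (fun x : (Fin n → ℂ) × (Fin n → ℂ) => (x.1, x.2, (0 : ℂ))) (𝓝 0) (𝓝 0) :=
    Continuous.tendsto' (by fun_prop) 0 0 rfl
  have hPstar : star ∘ (fun x : (Fin n → ℂ) × (Fin n → ℂ) => Q x.1 x.2 0) ∘ star =ᶠ[𝓝 0]
      fun x => P (x.1, x.2, 0) := by
    refine (hincl.eventually (hQ.eventuallyEq_star_star hP)).mono fun x hx => ?_
    simpa using hx
  have hstar : Tendsto (star : (Fin n → ℂ) → Fin n → ℂ) (𝓝 0) (𝓝 0) :=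
    continuous_star.tendsto' 0 0 (star_zero _)
  refine hstar.frequently ((hslice.and_eventually
    ((tendsto_prodMk_zero_left.eventually hP.left.analyticAt_slice.eventually_analyticAt).and
    ((tendsto_prodMk_zero_left.comp hstar).eventually hPstar.eventually_nhds))).mono ?_)
  rintro χ ⟨hχ, hQχ, hPχ⟩
  exact (hχ.star_star hQχ).congr hPχ

end SegrePair

section JacobianDeterminant

variable {V : Type*} [NormedAddCommGroup V] [NormedSpace ℂ V] [FiniteDimensional ℂ V]

theorem analyticAt_det_fderiv {F : V → V} {x : V} (hF : AnalyticAt ℂ F x) :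
    AnalyticAt ℂ (fun y => (fderiv ℂ F y).det) x := by
  have := FiniteDimensional.complete ℂ V
  set b := Module.finBasis ℂ V
  have hdet : (fun y => (fderiv ℂ F y).det) = fun y =>
      (LinearMap.toMatrix b b (fderiv ℂ F y : V →ₗ[ℂ] V)).det :=
    funext fun y => (LinearMap.det_toMatrix b _).symm
  rw [hdet]
  refine analyticAt_det fun i j => ?_
  simp only [LinearMap.toMatrix_apply]
  exact ((b.coord i).toContinuousLinearMap.analyticAt _).comp
    (analyticAt_fderiv_apply_const hF (b j))

theorem exists_ne_zero_of_det_eq_zero {L : V →L[ℂ] V} (hL : L.det = 0) : ∃ v ≠ 0, L v = 0 := by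
  obtain ⟨v, hv, hv0⟩ :=
    Submodule.exists_mem_ne_zero_of_ne_bot (LinearMap.bot_lt_ker_of_det_eq_zero hL).ne'
  exact ⟨v, hv0, hv⟩

theorem surjective_of_det_ne_zero {L : V →L[ℂ] V} (hL : L.det ≠ 0) : Function.Surjective L :=
  (LinearMap.equivOfDetNeZero (L : V →ₗ[ℂ] V) hL).surjective

end JacobianDeterminant

section SegreMap

variable {E : Type*} [NormedAddCommGroup E] [NormedSpace ℂ E]
  {Q P Q' P' : E × E × ℂ → ℂ} {F Ft : E × ℂ → E × ℂ}

/-- The defining equation `Q (z, χ, τ) - w` of the complexified hypersurface in the variables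
`((z, w), (χ, τ))`. -/
def definingEq (Q : E × E × ℂ → ℂ) (y : (E × ℂ) × (E × ℂ)) : ℂ := Q (y.1.1, y.2) - y.1.2

/-- The parametrization of the complexified hypersurface by `(z, χ, τ)`. -/
def graphMap (Q : E × E × ℂ → ℂ) (x : E × E × ℂ) : (E × ℂ) × (E × ℂ) := ((x.1, Q x), x.2)

/-- The pullback of the defining equation of the target under a pair `F` in the variables `(z, w)`
and `Ft` in the variables `(χ, τ)`. -/
def pullbackEq (Q' : E × E × ℂ → ℂ) (F Ft : E × ℂ → E × ℂ) (y : (E × ℂ) × (E × ℂ)) : ℂ :=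
  definingEq Q' (F y.1, Ft y.2)

/-- A holomorphic Segre preserving map `(F, Ft)`, with `F = (f, g)` and `Ft = (f̃, g̃)`, together
with both ways of solving the equations of the source and of the target. -/
structure SegreMap (Q P Q' P' : E × E × ℂ → ℂ) (F Ft : E × ℂ → E × ℂ) : Prop where
  source : SegrePair Q P
  target : SegrePair Q' P'
  analyticAt_left : AnalyticAt ℂ F 0
  analyticAt_right : AnalyticAt ℂ Ft 0
  left_zero : F 0 = 0
  right_zero : Ft 0 = 0
  maps : ∀ᶠ x in 𝓝 (0 : E × E × ℂ), pullbackEq Q' F Ft (graphMap Q x) = 0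

theorem SegrePair.definingEq_swap (h : SegrePair Q P) :
    ∀ᶠ y in 𝓝 (0 : (E × ℂ) × (E × ℂ)), definingEq Q y = 0 → definingEq P y.swap = 0 := by
  have hcoord : Tendsto (fun y : (E × ℂ) × (E × ℂ) => (y.2.1, y.1.1, y.2.2)) (𝓝 0) (𝓝 0) :=
    Continuous.tendsto' (by fun_prop) 0 0 rfl
  filter_upwards [hcoord.eventually h.comp'] with y hy hQy
  rw [sub_eq_zero.1 hQy] at hy
  exact sub_eq_zero.2 hy

theorem IsNormal.analyticAt_definingEq (hQ : IsNormal Q) : AnalyticAt ℂ (definingEq Q) 0 :=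
  (hQ.analyticAt.comp_of_eq (f := fun y : (E × ℂ) × (E × ℂ) => (y.1.1, y.2)) (by fun_prop) rfl).sub
    (by fun_prop)

theorem IsNormal.analyticAt_graphMap (hQ : IsNormal Q) : AnalyticAt ℂ (graphMap Q) 0 :=
  (analyticAt_fst.prod hQ.analyticAt).prod analyticAt_snd

theorem IsNormal.graphMap_zero (hQ : IsNormal Q) : graphMap Q 0 = 0 := by
  simp only [graphMap, hQ.apply_zero]
  rfl

theorem IsNormal.tendsto_graphMap (hQ : IsNormal Q) : Tendsto (graphMap Q) (𝓝 0) (𝓝 0) :=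
  hQ.analyticAt_graphMap.continuousAt.tendsto.trans_eq (congrArg 𝓝 hQ.graphMap_zero)

namespace SegreMap

theorem tendsto_left (h : SegreMap Q P Q' P' F Ft) : Tendsto F (𝓝 0) (𝓝 0) :=
  h.analyticAt_left.continuousAt.tendsto.trans_eq (congrArg 𝓝 h.left_zero)

theorem tendsto_right (h : SegreMap Q P Q' P' F Ft) : Tendsto Ft (𝓝 0) (𝓝 0) :=
  h.analyticAt_right.continuousAt.tendsto.trans_eq (congrArg 𝓝 h.right_zero)

theorem tendsto_prod (h : SegreMap Q P Q' P' F Ft) :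
    Tendsto (fun y : (E × ℂ) × (E × ℂ) => (F y.1, Ft y.2)) (𝓝 0) (𝓝 0) :=
  (h.tendsto_left.comp (continuous_fst.tendsto' 0 0 rfl)).prodMk_nhds
    (h.tendsto_right.comp (continuous_snd.tendsto' 0 0 rfl))

theorem symm (h : SegreMap Q P Q' P' F Ft) : SegreMap P Q P' Q' Ft F := by
  refine ⟨h.source.symm, h.target.symm, h.analyticAt_right, h.analyticAt_left, h.right_zero,
    h.left_zero, ?_⟩
  have hgraph : Tendsto (fun x : E × E × ℂ => (x.2.1, x.1, P x)) (𝓝 0) (𝓝 0) := by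
    have hP : ContinuousAt P 0 := h.source.right.analyticAt.continuousAt
    have : ContinuousAt (fun x : E × E × ℂ => (x.2.1, x.1, P x)) 0 := by fun_prop
    simpa only [ContinuousAt, h.source.right.apply_zero, Prod.fst_zero, Prod.snd_zero,
      Prod.mk_zero_zero] using this
  have hswap : Tendsto (fun x : E × E × ℂ => (x.2.1, x.1, x.2.2)) (𝓝 0) (𝓝 0) :=
    Continuous.tendsto' (by fun_prop) 0 0 rfl
  filter_upwards [hgraph.eventually h.maps, hswap.eventually h.source.comp,
    hgraph.eventually (h.source.left.tendsto_graphMap.eventually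
      (h.tendsto_prod.eventually h.target.definingEq_swap))] with x hmaps hcomp hflip
  have hP := hflip hmaps
  simp only [graphMap, hcomp] at hP
  exact hP

theorem analyticAt_pullbackEq (h : SegreMap Q P Q' P' F Ft) :
    AnalyticAt ℂ (pullbackEq Q' F Ft) 0 := by
  have hF : AnalyticAt ℂ (fun y : (E × ℂ) × (E × ℂ) => F y.1) 0 :=
    h.analyticAt_left.comp_of_eq analyticAt_fst rfl
  have hFt : AnalyticAt ℂ (fun y : (E × ℂ) × (E × ℂ) => Ft y.2) 0 :=
    h.analyticAt_right.comp_of_eq analyticAt_snd rfl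
  exact h.target.left.analyticAt_definingEq.comp_of_eq (hF.prod hFt)
    (Prod.ext h.left_zero h.right_zero)

theorem snd_right_eq_zero (h : SegreMap Q P Q' P' F Ft) :
    ∀ᶠ χ in 𝓝 (0 : E), (Ft (χ, 0)).2 = 0 := by
  filter_upwards [tendsto_prodMk_zero_right.eventually (tendsto_prodMk_zero_left.eventually h.maps),
    tendsto_prodMk_zero_right.eventually h.source.left.apply_zero_left,
    tendsto_prodMk_zero_right.eventually (h.tendsto_right.eventually h.target.left.apply_zero_left)]
    with χ hmaps hQ hQ'
  have hF : F (0, 0) = 0 := h.left_zero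
  simpa only [pullbackEq, definingEq, graphMap, hQ, hF, Prod.fst_zero, Prod.snd_zero, hQ',
    sub_zero] using hmaps

theorem analyticAt_right_slice (h : SegreMap Q P Q' P' F Ft) :
    AnalyticAt ℂ (fun χ : E => (Ft (χ, 0)).1) 0 :=
  analyticAt_fst.comp (h.analyticAt_right.comp_of_eq (f := fun χ : E => (χ, (0 : ℂ)))
    (by fun_prop) rfl)

end SegreMap

/-- The conclusion of the degenerate case: `g ≡ 0`, `g̃ ≡ 0` and `Q' (f, f̃, 0) ≡ 0` near `0`. -/
structure IsNull (Q' : E × E × ℂ → ℂ) (F Ft : E × ℂ → E × ℂ) : Prop where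
  snd_left : ∀ᶠ p in 𝓝 (0 : E × ℂ), (F p).2 = 0
  snd_right : ∀ᶠ p in 𝓝 (0 : E × ℂ), (Ft p).2 = 0
  apply_fst : ∀ᶠ y in 𝓝 (0 : (E × ℂ) × (E × ℂ)), Q' ((F y.1).1, (Ft y.2).1, 0) = 0

namespace SegreMap

theorem isNull_of_pullbackEq_eq_zero (h : SegreMap Q P Q' P' F Ft)
    (hzero : ∀ᶠ y in 𝓝 (0 : (E × ℂ) × (E × ℂ)), pullbackEq Q' F Ft y = 0) : IsNull Q' F Ft := by
  have hleft : ∀ᶠ p in 𝓝 (0 : E × ℂ), (F p).2 = 0 := by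
    have hfst : Tendsto (fun p => ((F p).1, (0 : ℂ))) (𝓝 0) (𝓝 0) :=
      ((continuous_fst.tendsto' 0 0 rfl).comp h.tendsto_left).prodMk_nhds tendsto_const_nhds
    filter_upwards [tendsto_prodMk_zero_right.eventually hzero,
      hfst.eventually h.target.left.apply_zero_right]
      with p hp hQ'
    rw [pullbackEq, h.right_zero] at hp
    exact ((sub_eq_zero.1 hp).symm.trans hQ')
  have hright : ∀ᶠ p in 𝓝 (0 : E × ℂ), (Ft p).2 = 0 := by
    filter_upwards [tendsto_prodMk_zero_left.eventually hzero,
      h.tendsto_right.eventually h.target.left.apply_zero_left] with p hp hQ'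
    rw [pullbackEq, h.left_zero] at hp
    exact hQ'.symm.trans (sub_eq_zero.1 hp)
  refine ⟨hleft, hright, ?_⟩
  filter_upwards [hzero, (continuous_fst.tendsto' 0 0 rfl).eventually hleft,
    (continuous_snd.tendsto' 0 0 rfl).eventually hright] with y hy hFy hFty
  have hFt : Ft y.2 = ((Ft y.2).1, 0) := Prod.ext rfl hFty
  rw [← hFt]
  exact (sub_eq_zero.1 hy).trans hFy

variable [FiniteDimensional ℂ E]

theorem pullbackEq_eq_zero_of_det_right (h : SegreMap Q P Q' P' F Ft)
    (hsep : ∃ᶠ p in 𝓝 (0 : E × ℂ), Separating Q p)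
    (hdet : ∀ᶠ p in 𝓝 (0 : E × ℂ), (fderiv ℂ Ft p).det = 0) :
    ∀ᶠ y in 𝓝 (0 : (E × ℂ) × (E × ℂ)), pullbackEq Q' F Ft y = 0 := by
  have := FiniteDimensional.complete ℂ E
  have hF : AnalyticAt ℂ (fun y : (E × ℂ) × (E × ℂ) => F y.1) 0 :=
    h.analyticAt_left.comp_of_eq analyticAt_fst rfl
  exact eventually_eq_zero_of_degenerate h.source.left.analyticAt h.source.left.apply_zero hsep
    h.analyticAt_right h.right_zero (hdet.mono fun p hp => exists_ne_zero_of_det_eq_zero hp)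
    (Ψ := fun y => definingEq Q' (F y.1, y.2))
    (h.target.left.analyticAt_definingEq.comp_of_eq (hF.prod analyticAt_snd)
      (Prod.ext h.left_zero rfl)) h.maps

theorem isNull_of_det_right (h : SegreMap Q P Q' P' F Ft)
    (hsep : ∃ᶠ χ in 𝓝 (0 : E), Separating (fun x : E × E => Q (x.1, x.2, 0)) χ)
    (hdet : ∀ᶠ p in 𝓝 (0 : E × ℂ), (fderiv ℂ Ft p).det = 0) : IsNull Q' F Ft :=
  h.isNull_of_pullbackEq_eq_zero (h.pullbackEq_eq_zero_of_det_right
    (h.source.left.frequently_separating_of_slice hsep) hdet)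

theorem isNull_of_det_left (h : SegreMap Q P Q' P' F Ft)
    (hsep : ∃ᶠ z in 𝓝 (0 : E), Separating (fun x : E × E => P (x.1, x.2, 0)) z)
    (hdet : ∀ᶠ p in 𝓝 (0 : E × ℂ), (fderiv ℂ F p).det = 0) : IsNull Q' F Ft := by
  have hswap : Tendsto (Prod.swap : (E × ℂ) × (E × ℂ) → _) (𝓝 0) (𝓝 0) :=
    continuous_swap.tendsto' 0 0 rfl
  apply h.isNull_of_pullbackEq_eq_zero
  filter_upwards [hswap.eventually (h.symm.pullbackEq_eq_zero_of_det_right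
      (h.source.right.frequently_separating_of_slice hsep) hdet),
    hswap.eventually (h.symm.tendsto_prod.eventually h.target.symm.definingEq_swap)] with y hy hflip
  exact hflip hy

theorem snd_left_eq_zero_of_det_slice (h : SegreMap Q P Q' P' F Ft)
    (hsep : ∃ᶠ χ in 𝓝 (0 : E), Separating (fun x : E × E => Q (x.1, x.2, 0)) χ)
    (hdet : ∀ᶠ χ in 𝓝 (0 : E), (fderiv ℂ (fun χ => (Ft (χ, 0)).1) χ).det = 0) :
    ∀ᶠ p in 𝓝 (0 : E × ℂ), (F p).2 = 0 := by
  have := FiniteDimensional.complete ℂ E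
  have hF : AnalyticAt ℂ (fun y : (E × ℂ) × E => F y.1) 0 :=
    h.analyticAt_left.comp_of_eq analyticAt_fst rfl
  have hft0 : (Ft ((0 : E), (0 : ℂ))).1 = 0 := congrArg Prod.fst h.right_zero
  have hslice : Tendsto (fun x : E × E => (x.1, x.2, (0 : ℂ))) (𝓝 0) (𝓝 0) :=
    Continuous.tendsto' (by fun_prop) 0 0 rfl
  have hzero : ∀ᶠ x in 𝓝 (0 : E × E),
      definingEq Q' (F (x.1, Q (x.1, x.2, 0)), (Ft (x.2, 0)).1, 0) = 0 := by
    filter_upwards [hslice.eventually h.maps,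
      (continuous_snd.tendsto' (0 : E × E) 0 rfl).eventually h.snd_right_eq_zero] with x hx hgt
    have hFt : Ft (x.2, 0) = ((Ft (x.2, 0)).1, 0) := Prod.ext rfl hgt
    rw [← hFt]
    exact hx
  have hfull := eventually_eq_zero_of_degenerate h.source.left.analyticAt_slice
    h.source.left.apply_zero hsep h.analyticAt_right_slice hft0
    (hdet.mono fun χ hχ => exists_ne_zero_of_det_eq_zero hχ)
    (Ψ := fun y => definingEq Q' (F y.1, y.2, 0))
    (h.target.left.analyticAt_definingEq.comp_of_eq
      (hF.prod (analyticAt_snd.prod analyticAt_const)) (Prod.ext h.left_zero rfl)) hzero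
  have hfst : Tendsto (fun p => ((F p).1, (0 : ℂ))) (𝓝 0) (𝓝 0) :=
    ((continuous_fst.tendsto' 0 0 rfl).comp h.tendsto_left).prodMk_nhds tendsto_const_nhds
  filter_upwards [tendsto_prodMk_zero_right.eventually hfull,
    hfst.eventually h.target.left.apply_zero_right]
    with p hp hQ'
  rw [hft0] at hp
  exact (sub_eq_zero.1 hp).symm.trans hQ'

end SegreMap

theorem det_fderiv_eq_zero_of_snd_eq_zero [FiniteDimensional ℂ E] {F : E × ℂ → E × ℂ}
    (hF : AnalyticAt ℂ F 0)
    (h : ∀ᶠ p in 𝓝 (0 : E × ℂ), (F p).2 = 0) :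
    ∀ᶠ p in 𝓝 (0 : E × ℂ), (fderiv ℂ F p).det = 0 := by
  have := FiniteDimensional.complete ℂ E
  filter_upwards [h.eventually_nhds, hF.eventually_analyticAt] with p hp hFp
  by_contra hdet
  obtain ⟨v, hv⟩ := surjective_of_det_ne_zero hdet (0, 1)
  have hsnd : HasFDerivAt (fun q => (F q).2) (0 : E × ℂ →L[ℂ] ℂ) p :=
    (hasFDerivAt_const 0 p).congr_of_eventuallyEq hp
  have hzero := DFunLike.congr_fun (hFp.differentiableAt.hasFDerivAt.snd.unique hsnd) v
  exact one_ne_zero ((congrArg Prod.snd hv).symm.trans hzero)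

theorem SegreMap.not_eventually_det_slice_eq_zero [FiniteDimensional ℂ E]
    (h : SegreMap Q P Q' P' F Ft)
    (hsep : ∃ᶠ χ in 𝓝 (0 : E), Separating (fun x : E × E => Q (x.1, x.2, 0)) χ)
    (hF : ¬ ∀ᶠ p in 𝓝 (0 : E × ℂ), (fderiv ℂ F p).det = 0) :
    ¬ ∀ᶠ χ in 𝓝 (0 : E), (fderiv ℂ (fun χ => (Ft (χ, 0)).1) χ).det = 0 :=
  fun hdet => hF (det_fderiv_eq_zero_of_snd_eq_zero h.analyticAt_left
    (h.snd_left_eq_zero_of_det_slice hsep hdet))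

end SegreMap

section TransversalDerivative

variable {E : Type*} [NormedAddCommGroup E] [NormedSpace ℂ E]
  {Q P Q' P' : E × E × ℂ → ℂ} {F Ft : E × ℂ → E × ℂ}

/-- The `w`-derivative of a function `Φ` of `((z, w), (χ, τ))` along the complexified
hypersurface. -/
noncomputable def transversalDeriv (Q : E × E × ℂ → ℂ) (Φ : (E × ℂ) × (E × ℂ) → ℂ)
    (x : E × E × ℂ) : ℂ :=
  fderiv ℂ Φ (graphMap Q x) ((0, 1), 0)

theorem fderiv_graphMap_apply_of_comp_eq_zero {Φ : (E × ℂ) × (E × ℂ) → ℂ} {x : E × E × ℂ}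
    (hQ : DifferentiableAt ℂ Q x) (hΦ : DifferentiableAt ℂ Φ (graphMap Q x))
    (hzero : ∀ᶠ y in 𝓝 x, Φ (graphMap Q y) = 0) (a : E) (w : ℂ) (b : E × ℂ) :
    fderiv ℂ Φ (graphMap Q x) ((a, w), b) =
      transversalDeriv Q Φ x * (w - fderiv ℂ Q x (a, b)) := by
  have htangent : fderiv ℂ Φ (graphMap Q x) ((a, fderiv ℂ Q x (a, b)), b) = 0 := by
    have hgraph := fderiv_comp_graph_apply (h := id) hQ differentiableAt_id hΦ a b
    have hconst : fderiv ℂ (fun y => Φ (graphMap Q y)) x = 0 :=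
      (EventuallyEq.fderiv_eq (f := fun _ => (0 : ℂ)) hzero).trans (fderiv_const_apply 0)
    rw [fderiv_id] at hgraph
    exact hgraph.symm.trans (DFunLike.congr_fun hconst (a, b))
  have hsplit : ((a, w), b) = ((a, fderiv ℂ Q x (a, b)), b) +
      (w - fderiv ℂ Q x (a, b)) • (((0 : E), (1 : ℂ)), (0 : E × ℂ)) := by
    simp
  rw [hsplit, map_add, htangent, zero_add, map_smul, smul_eq_mul, mul_comm]
  rfl

namespace SegreMap

theorem analyticAt_transversalDeriv (h : SegreMap Q P Q' P' F Ft) :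
    AnalyticAt ℂ (transversalDeriv Q (pullbackEq Q' F Ft)) 0 :=
  AnalyticAt.comp_of_eq (analyticAt_fderiv_apply_const h.analyticAt_pullbackEq ((0, 1), 0))
    h.source.left.analyticAt_graphMap h.source.left.graphMap_zero

theorem fderiv_pullbackEq_apply [CompleteSpace E] (h : SegreMap Q P Q' P' F Ft) :
    ∀ᶠ y in 𝓝 (0 : (E × ℂ) × (E × ℂ)), ∀ v b, fderiv ℂ (pullbackEq Q' F Ft) y (v, b) =
      fderiv ℂ Q' ((F y.1).1, Ft y.2) ((fderiv ℂ F y.1 v).1, fderiv ℂ Ft y.2 b) -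
        (fderiv ℂ F y.1 v).2 := by
  have hdata : Tendsto (fun y : (E × ℂ) × (E × ℂ) => ((F y.1).1, Ft y.2)) (𝓝 0) (𝓝 0) :=
    ((continuous_fst.fst.prodMk continuous_snd).tendsto' 0 0 rfl).comp h.tendsto_prod
  filter_upwards [(continuous_fst.tendsto' 0 0 rfl).eventually
      h.analyticAt_left.eventually_analyticAt,
    (continuous_snd.tendsto' 0 0 rfl).eventually h.analyticAt_right.eventually_analyticAt,
    hdata.eventually h.target.left.analyticAt.eventually_analyticAt] with y hF hFt hQ' v b
  have hF' : HasFDerivAt (fun y : (E × ℂ) × (E × ℂ) => F y.1) _ y :=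
    hF.differentiableAt.hasFDerivAt.comp y hasFDerivAt_fst
  have hFt' : HasFDerivAt (fun y : (E × ℂ) × (E × ℂ) => Ft y.2) _ y :=
    hFt.differentiableAt.hasFDerivAt.comp y hasFDerivAt_snd
  have hcomp := (hQ'.differentiableAt.hasFDerivAt.comp
    (f := fun y : (E × ℂ) × (E × ℂ) => ((F y.1).1, Ft y.2)) y (hF'.fst.prodMk hFt')).sub hF'.snd
  exact DFunLike.congr_fun hcomp.fderiv (v, b)

theorem fderiv_target_apply [CompleteSpace E] (h : SegreMap Q P Q' P' F Ft) :
    ∀ᶠ x in 𝓝 (0 : E × E × ℂ), ∀ a w b,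
      fderiv ℂ Q' ((F (x.1, Q x)).1, Ft x.2)
          ((fderiv ℂ F (x.1, Q x) (a, w)).1, fderiv ℂ Ft x.2 b) -
        (fderiv ℂ F (x.1, Q x) (a, w)).2 =
      transversalDeriv Q (pullbackEq Q' F Ft) x * (w - fderiv ℂ Q x (a, b)) := by
  filter_upwards [h.maps.eventually_nhds, h.source.left.analyticAt.eventually_analyticAt,
    h.source.left.tendsto_graphMap.eventually (h.fderiv_pullbackEq_apply.and
      h.analyticAt_pullbackEq.eventually_analyticAt)] with x hmaps hQ hΦ a w b
  rw [← fderiv_graphMap_apply_of_comp_eq_zero hQ.differentiableAt hΦ.2.differentiableAt hmaps]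
  exact (hΦ.1 (a, w) b).symm

theorem transversalDeriv_zero [CompleteSpace E] (h : SegreMap Q P Q' P' F Ft) :
    transversalDeriv Q (pullbackEq Q' F Ft) 0 = -(fderiv ℂ F 0 (0, 1)).2 := by
  have hzero := h.fderiv_target_apply.self_of_nhds 0 1 0
  simp only [Prod.fst_zero, Prod.snd_zero, h.source.left.apply_zero, Prod.mk_zero_zero,
    h.left_zero, h.right_zero, map_zero, sub_zero, mul_one] at hzero
  rw [← hzero, h.target.left.fderiv_zero_apply, Prod.snd_zero, zero_sub]

variable [FiniteDimensional ℂ E]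

theorem det_left_eq_zero_of_transversalDeriv_eq_zero (h : SegreMap Q P Q' P' F Ft) :
    ∀ᶠ x in 𝓝 (0 : E × E × ℂ), transversalDeriv Q (pullbackEq Q' F Ft) x = 0 →
      (fderiv ℂ F (x.1, Q x)).det = 0 := by
  have := FiniteDimensional.complete ℂ E
  filter_upwards [h.fderiv_target_apply] with x hx hu
  by_contra hdet
  obtain ⟨v, hv⟩ := surjective_of_det_ne_zero hdet (0, 1)
  have hzero := hx v.1 v.2 0
  rw [Prod.mk.eta, hv, hu, map_zero, Prod.mk_zero_zero, map_zero, zero_sub, zero_mul] at hzero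
  exact one_ne_zero (neg_eq_zero.1 hzero)

theorem det_right_eq_zero_of_transversalDeriv_eq_zero (h : SegreMap Q P Q' P' F Ft) :
    ∀ᶠ x in 𝓝 (0 : E × E × ℂ), transversalDeriv Q (pullbackEq Q' F Ft) x = 0 →
      (fderiv ℂ Ft x.2).det = 0 := by
  have := FiniteDimensional.complete ℂ E
  have htransversal : ∀ᶠ y in 𝓝 (0 : E × E × ℂ), fderiv ℂ Q' y (0, (0, 1)) ≠ 0 := by
    refine (analyticAt_fderiv_apply_const h.target.left.analyticAt _).continuousAt.eventually_ne ?_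
    simp [h.target.left.fderiv_zero_apply]
  have hdata : Tendsto (fun x => ((F (x.1, Q x)).1, Ft x.2)) (𝓝 0) (𝓝 0) :=
    ((continuous_fst.fst.prodMk continuous_snd).tendsto' 0 0 rfl).comp
      (h.tendsto_prod.comp h.source.left.tendsto_graphMap)
  filter_upwards [h.fderiv_target_apply, hdata.eventually htransversal] with x hx hQ' hu
  by_contra hdet
  obtain ⟨b, hb⟩ := surjective_of_det_ne_zero hdet (0, 1)
  have hzero := hx 0 0 b
  rw [Prod.mk_zero_zero, map_zero, hb, hu, zero_mul, Prod.fst_zero, Prod.snd_zero, sub_zero]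
    at hzero
  exact hQ' hzero

end SegreMap

end TransversalDerivative

section Transversality

theorem frequently_separating_and_ne_zero {E F : Type*} [NormedAddCommGroup E] [NormedSpace ℂ E]
    [NormedAddCommGroup F] [NormedSpace ℂ F] [FiniteDimensional ℂ F] {q : E × F → ℂ} {K : F → ℂ}
    (hq : AnalyticAt ℂ q 0) (hK : AnalyticAt ℂ K 0)
    (hsep : ∃ᶠ p in 𝓝 (0 : F), Separating q p) (hKne : ¬ ∀ᶠ p in 𝓝 (0 : F), K p = 0) :
    ∃ᶠ p in 𝓝 (0 : F), Separating q p ∧ K p ≠ 0 := by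
  intro hnot
  refine hKne (eventually_eq_zero_of_frequently_eventually_eq_zero hK ((hsep.and_eventually
    ((tendsto_prodMk_zero_left.eventually hq.eventually_analyticAt).and
      hnot.eventually_nhds)).mono ?_))
  rintro p ⟨hp, hqp, hnotp⟩
  filter_upwards [eventually_separating_of_separating hqp hp, hnotp] with p' hp' hnotp'
  by_contra hKp'
  exact hnotp' ⟨hp', hKp'⟩

variable {E : Type*} [NormedAddCommGroup E] [NormedSpace ℂ E] [FiniteDimensional ℂ E]
  {Q P Q' P' : E × E × ℂ → ℂ} {F Ft : E × ℂ → E × ℂ}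

theorem eventually_eq_zero_of_eq_zero_on_graphs [Nontrivial E] {q : E × E → ℂ} {K : E × ℂ → ℂ}
    (hq : AnalyticAt ℂ q 0) (hq0 : q 0 = 0) (hsep : ∃ᶠ p in 𝓝 (0 : E), Separating q p)
    (hK : AnalyticAt ℂ K 0) (hzero : ∀ᶠ x in 𝓝 (0 : E × E), K (x.1, q x) = 0) :
    ∀ᶠ p in 𝓝 (0 : E × ℂ), K p = 0 := by
  have := FiniteDimensional.complete ℂ E
  obtain ⟨v, hv⟩ := exists_ne (0 : E)
  exact tendsto_prodMk_zero_right.eventually (eventually_eq_zero_of_degenerate hq hq0 hsep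
    (h := fun _ => (0 : E)) analyticAt_const rfl (.of_forall fun p => ⟨v, hv, by simp⟩)
    (Ψ := fun y => K y.1) (hK.comp_of_eq analyticAt_fst rfl) hzero)

namespace SegreMap

theorem fderiv_right_slice_apply (h : SegreMap Q P Q' P' F Ft) :
    ∀ᶠ χ in 𝓝 (0 : E), ∀ v,
      fderiv ℂ Ft (χ, 0) (v, 0) = (fderiv ℂ (fun χ => (Ft (χ, 0)).1) χ v, 0) := by
  have := FiniteDimensional.complete ℂ E
  filter_upwards [tendsto_prodMk_zero_right.eventually h.analyticAt_right.eventually_analyticAt,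
    h.snd_right_eq_zero.eventually_nhds] with χ hFt hgt v
  have hslice := hFt.differentiableAt.hasFDerivAt.comp (f := fun χ : E => (χ, (0 : ℂ))) χ
    (hasFDerivAt_prodMk_left χ 0)
  have hsnd : HasFDerivAt (fun χ => (Ft (χ, 0)).2) (0 : E →L[ℂ] ℂ) χ :=
    (hasFDerivAt_const 0 χ).congr_of_eventuallyEq hgt
  have hfst : fderiv ℂ (fun χ => (Ft (χ, 0)).1) χ v = _ :=
    DFunLike.congr_fun hslice.fst.fderiv v
  exact Prod.ext hfst.symm (DFunLike.congr_fun (hslice.snd.unique hsnd) v)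

theorem fderiv_target_slice_apply (h : SegreMap Q P Q' P' F Ft) :
    ∀ᶠ x in 𝓝 (0 : E × E), ∀ v, fderiv ℂ (fun x : E × E => Q' (x.1, x.2, 0))
        ((F (x.1, Q (x.1, x.2, 0))).1, (Ft (x.2, 0)).1)
        (0, fderiv ℂ (fun χ => (Ft (χ, 0)).1) x.2 v) =
      -(transversalDeriv Q (pullbackEq Q' F Ft) (x.1, x.2, 0) *
        fderiv ℂ (fun x : E × E => Q (x.1, x.2, 0)) x (0, v)) := by
  have := FiniteDimensional.complete ℂ E
  have hincl : Tendsto (fun x : E × E => (x.1, x.2, (0 : ℂ))) (𝓝 0) (𝓝 0) :=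
    Continuous.tendsto' (by fun_prop) 0 0 rfl
  have hsnd : Tendsto (Prod.snd : E × E → E) (𝓝 0) (𝓝 0) := continuous_snd.tendsto' 0 0 rfl
  have hdata : Tendsto (fun y : (E × ℂ) × (E × ℂ) => ((F y.1).1, (Ft y.2).1)) (𝓝 0) (𝓝 0) :=
    ((continuous_fst.fst.prodMk continuous_snd.fst).tendsto' 0 0 rfl).comp h.tendsto_prod
  filter_upwards [hincl.eventually h.fderiv_target_apply,
    hincl.eventually (h.source.left.tendsto_graphMap.eventually
      (hdata.eventually h.target.left.fderiv_slice_apply)),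
    h.source.left.fderiv_slice_apply, hsnd.eventually h.fderiv_right_slice_apply,
    hsnd.eventually h.snd_right_eq_zero] with x htarget hQ' hQ hFt hgt v
  have hFt0 : Ft (x.2, 0) = ((Ft (x.2, 0)).1, 0) := Prod.ext rfl hgt
  have hx := htarget 0 0 (v, 0)
  rw [hFt v, Prod.mk_zero_zero, map_zero, hFt0] at hx
  rw [hQ (0, v), ← mul_neg, ← zero_sub, ← hx]
  exact (hQ' _).trans (sub_zero _).symm

theorem tendsto_fst_left_graph_slice (h : SegreMap Q P Q' P' F Ft) :
    ∀ᶠ χ in 𝓝 (0 : E), Tendsto (fun z : E => (F (z, Q (z, χ, 0))).1) (𝓝 0) (𝓝 0) := by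
  have := FiniteDimensional.complete ℂ E
  have hF : AnalyticAt ℂ (fun x : E × E => F (x.1, Q (x.1, x.2, 0))) 0 :=
    h.analyticAt_left.comp_of_eq (analyticAt_fst.prod h.source.left.analyticAt_slice)
      (Prod.ext rfl h.source.left.apply_zero)
  filter_upwards [tendsto_prodMk_zero_left.eventually hF.eventually_analyticAt,
    tendsto_prodMk_zero_right.eventually h.source.left.apply_zero_left] with χ hχ hQ
  have hcont : ContinuousAt (fun z : E => (F (z, Q (z, χ, 0))).1) 0 :=
    (hχ.continuousAt.comp (f := fun z : E => (z, χ)) (by fun_prop)).fst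
  refine hcont.tendsto.trans_eq ?_
  rw [hQ, Prod.mk_zero_zero, h.left_zero, Prod.fst_zero]

theorem separating_target_of_separating (h : SegreMap Q P Q' P' F Ft)
    (hu : transversalDeriv Q (pullbackEq Q' F Ft) 0 ≠ 0) :
    ∀ᶠ χ in 𝓝 (0 : E), Separating (fun x : E × E => Q (x.1, x.2, 0)) χ →
      (fderiv ℂ (fun χ => (Ft (χ, 0)).1) χ).det ≠ 0 →
      Separating (fun x : E × E => Q' (x.1, x.2, 0)) (Ft (χ, 0)).1 := by
  have hincl : Tendsto (fun x : E × E => (x.1, x.2, (0 : ℂ))) (𝓝 0) (𝓝 0) :=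
    Continuous.tendsto' (by fun_prop) 0 0 rfl
  filter_upwards [tendsto_prodMk_zero_left.eventually (h.fderiv_target_slice_apply.and
      (hincl.eventually (h.analyticAt_transversalDeriv.continuousAt.eventually_ne
        hu))).eventually_nhds, h.tendsto_fst_left_graph_slice] with χ hχ hF hsep hdet v' hv'
  obtain ⟨v, rfl⟩ := surjective_of_det_ne_zero hdet v'
  have hslice : Tendsto (fun z : E => (z, χ)) (𝓝 0) (𝓝 (0, χ)) :=
    tendsto_id.prodMk_nhds tendsto_const_nhds
  have hv : v = 0 := by
    refine hsep v ?_
    filter_upwards [hslice.eventually hχ, hF.eventually hv'] with z hz hz'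
    exact (mul_eq_zero.1 (neg_eq_zero.1 ((hz.1 v).symm.trans hz'))).resolve_left hz.2
  rw [hv, map_zero]

theorem frequently_separating_target (h : SegreMap Q P Q' P' F Ft)
    (hsep : ∃ᶠ χ in 𝓝 (0 : E), Separating (fun x : E × E => Q (x.1, x.2, 0)) χ)
    (hF : ¬ ∀ᶠ p in 𝓝 (0 : E × ℂ), (fderiv ℂ F p).det = 0)
    (hu : transversalDeriv Q (pullbackEq Q' F Ft) 0 ≠ 0) :
    ∃ᶠ χ in 𝓝 (0 : E), Separating (fun x : E × E => Q' (x.1, x.2, 0)) χ := by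
  have hft : Tendsto (fun χ : E => (Ft (χ, 0)).1) (𝓝 0) (𝓝 0) :=
    h.analyticAt_right_slice.continuousAt.tendsto.trans_eq
      (congrArg (fun p : E × ℂ => 𝓝 p.1) h.right_zero)
  exact hft.frequently (((frequently_separating_and_ne_zero h.source.left.analyticAt_slice
    (analyticAt_det_fderiv h.analyticAt_right_slice) hsep
    (h.not_eventually_det_slice_eq_zero hsep hF)).and_eventually
    (h.separating_target_of_separating hu)).mono fun χ hχ => hχ.2 hχ.1.1 hχ.1.2)

theorem transversalDeriv_zero_left_eq_zero (h : SegreMap Q P Q' P' F Ft)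
    (hFt : ¬ ∀ᶠ p in 𝓝 (0 : E × ℂ), (fderiv ℂ Ft p).det = 0)
    (hu : transversalDeriv Q (pullbackEq Q' F Ft) 0 = 0) :
    ∀ᶠ z in 𝓝 (0 : E), transversalDeriv Q (pullbackEq Q' F Ft) (z, 0) = 0 :=
  eventually_eq_zero_of_zeros_over_zeros h.analyticAt_transversalDeriv
    (analyticAt_det_fderiv h.analyticAt_right) hFt
    h.det_right_eq_zero_of_transversalDeriv_eq_zero hu

theorem transversalDeriv_segre_eq_zero (h : SegreMap Q P Q' P' F Ft)
    (hF : ¬ ∀ᶠ p in 𝓝 (0 : E × ℂ), (fderiv ℂ F p).det = 0)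
    (hFt : ¬ ∀ᶠ p in 𝓝 (0 : E × ℂ), (fderiv ℂ Ft p).det = 0)
    (hu : transversalDeriv Q (pullbackEq Q' F Ft) 0 = 0) :
    ∀ᶠ z in 𝓝 (0 : E), ∀ᶠ χ in 𝓝 (0 : E),
      transversalDeriv Q (pullbackEq Q' F Ft) (z, χ, P (χ, z, 0)) = 0 := by
  have := FiniteDimensional.complete ℂ E
  have hP0 := h.source.right.apply_zero
  set σ : E × E × ℂ → E × E × ℂ := fun y => (y.2.1, y.1, P y) with hσdef
  have hP : AnalyticAt ℂ P 0 := h.source.right.analyticAt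
  have hσ : AnalyticAt ℂ σ 0 := by fun_prop
  have hσ0 : σ 0 = 0 := by simp only [hσdef, hP0]; rfl
  have hσtendsto : Tendsto σ (𝓝 0) (𝓝 0) := hσ.continuousAt.tendsto.trans_eq (congrArg 𝓝 hσ0)
  have hU : AnalyticAt ℂ (fun y => transversalDeriv Q (pullbackEq Q' F Ft) (σ y)) 0 :=
    h.analyticAt_transversalDeriv.comp_of_eq hσ hσ0
  have hK : AnalyticAt ℂ (fun p => (fderiv ℂ F p).det) 0 := analyticAt_det_fderiv h.analyticAt_left
  have hUK : ∀ᶠ y in 𝓝 (0 : E × E × ℂ),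
      transversalDeriv Q (pullbackEq Q' F Ft) (σ y) = 0 → (fderiv ℂ F y.2).det = 0 := by
    have hswap : Tendsto (fun y : E × E × ℂ => (y.2.1, y.1, y.2.2)) (𝓝 0) (𝓝 0) :=
      Continuous.tendsto' (by fun_prop) 0 0 rfl
    filter_upwards [hσtendsto.eventually h.det_left_eq_zero_of_transversalDeriv_eq_zero,
      hswap.eventually h.source.comp] with y hy hQP
    rwa [hQP] at hy
  have hKne : ∀ᶠ p in 𝓝 (0 : E × ℂ), ¬ ∀ᶠ p' in 𝓝 p, (fderiv ℂ F p').det = 0 :=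
    not_frequently.1 (mt (eventually_eq_zero_of_frequently_eventually_eq_zero hK) hF)
  filter_upwards [h.transversalDeriv_zero_left_eq_zero hFt hu,
    tendsto_prodMk_zero_right.eventually hKne,
    tendsto_prodMk_zero_right.eventually hK.eventually_analyticAt,
    tendsto_prodMk_zero_right.eventually h.source.right.apply_zero_left,
    tendsto_prodMk_zero_right.eventually (tendsto_prodMk_zero_left.eventually
      (hU.eventually_analyticAt.and hUK.eventually_nhds))] with z huz hKz hKan hPz hUz
  refine eventually_eq_zero_of_zeros_over_zeros hUz.1 hKan hKz hUz.2 ?_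
  change transversalDeriv Q (pullbackEq Q' F Ft) (z, 0, P (0, z, 0)) = 0
  rwa [hPz]

theorem transversalDeriv_zero_ne_zero [Nontrivial E] (h : SegreMap Q P Q' P' F Ft)
    (hsep : ∃ᶠ z in 𝓝 (0 : E), Separating (fun x : E × E => P (x.1, x.2, 0)) z)
    (hF : ¬ ∀ᶠ p in 𝓝 (0 : E × ℂ), (fderiv ℂ F p).det = 0)
    (hFt : ¬ ∀ᶠ p in 𝓝 (0 : E × ℂ), (fderiv ℂ Ft p).det = 0) :
    transversalDeriv Q (pullbackEq Q' F Ft) 0 ≠ 0 := by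
  intro hu
  have := FiniteDimensional.complete ℂ E
  have hP0 := h.source.right.apply_zero
  have hK : AnalyticAt ℂ (fun p => (fderiv ℂ Ft p).det) 0 :=
    analyticAt_det_fderiv h.analyticAt_right
  have hP := h.source.right.analyticAt_slice
  have hσ : Tendsto (fun x : E × E => (x.2, x.1, P (x.1, x.2, 0))) (𝓝 0) (𝓝 0) := by
    have hcont : ContinuousAt (fun x : E × E => (x.2, x.1, P (x.1, x.2, 0))) 0 :=
      continuousAt_snd.prodMk (continuousAt_fst.prodMk hP.continuousAt)
    exact hcont.tendsto.trans_eq (congrArg 𝓝 (Prod.ext rfl (Prod.ext rfl hP0)))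
  refine hFt (eventually_eq_zero_of_eq_zero_on_graphs hP hP0 hsep hK ?_)
  refine eventually_eq_zero_of_frequently_slice (x₀ := (0 : E)) (y₀ := (0 : E))
    (hK.comp_of_eq (analyticAt_fst.prod hP) (Prod.ext rfl hP0)) ?_
  have hdet : ∀ᶠ z in 𝓝 (0 : E), ∀ᶠ χ in 𝓝 (0 : E), (fderiv ℂ Ft (χ, P (χ, z, 0))).det = 0 := by
    have hright : ∀ᶠ x in 𝓝 (0 : E) ×ˢ 𝓝 (0 : E),
        transversalDeriv Q (pullbackEq Q' F Ft) (x.1, x.2, P (x.2, x.1, 0)) = 0 →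
          (fderiv ℂ Ft (x.2, P (x.2, x.1, 0))).det = 0 := by
      rw [← nhds_prod_eq]
      exact (continuous_swap.tendsto' 0 0 rfl).eventually
        (hσ.eventually h.det_right_eq_zero_of_transversalDeriv_eq_zero)
    filter_upwards [h.transversalDeriv_segre_eq_zero hF hFt hu, hright.curry] with z hz hz'
    exact (hz'.and hz).mono fun χ hχ => hχ.1 hχ.2
  exact hdet.eventually_nhds.frequently

theorem frequently_det_ne_zero (h : SegreMap Q P Q' P' F Ft)
    (hF : ¬ ∀ᶠ p in 𝓝 (0 : E × ℂ), (fderiv ℂ F p).det = 0)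
    (hFt : ¬ ∀ᶠ p in 𝓝 (0 : E × ℂ), (fderiv ℂ Ft p).det = 0) :
    ∃ᶠ x in 𝓝 (0 : E × E × ℂ), (fderiv ℂ F (x.1, Q x)).det ≠ 0 ∧ (fderiv ℂ Ft x.2).det ≠ 0 := by
  have hdetF : AnalyticAt ℂ (fun x : E × E × ℂ => (fderiv ℂ F (x.1, Q x)).det) 0 :=
    (analyticAt_det_fderiv h.analyticAt_left).comp_of_eq
      (analyticAt_fst.prod h.source.left.analyticAt) (Prod.ext rfl h.source.left.apply_zero)
  have hdetFt : AnalyticAt ℂ (fun x : E × E × ℂ => (fderiv ℂ Ft x.2).det) 0 :=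
    (analyticAt_det_fderiv h.analyticAt_right).comp_of_eq analyticAt_snd rfl
  intro hnot
  have hmul : ∀ᶠ x in 𝓝 (0 : E × E × ℂ),
      (fderiv ℂ F (x.1, Q x)).det * (fderiv ℂ Ft x.2).det = 0 :=
    hnot.mono fun x hx => by simpa only [mul_eq_zero, ne_eq, ← not_or, not_not] using hx
  rcases eventually_eq_zero_or_of_mul hdetF hdetFt hmul with hzero | hzero
  · have hincl : Tendsto (fun p : E × ℂ => (p.1, (0 : E), p.2)) (𝓝 0) (𝓝 0) :=
      Continuous.tendsto' (by fun_prop) 0 0 rfl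
    refine hF ?_
    filter_upwards [hincl.eventually hzero, h.source.left.apply_zero_right] with p hp hQ
    rwa [hQ] at hp
  · exact hFt (tendsto_prodMk_zero_left.eventually hzero)

end SegreMap

end Transversality

section Coordinates

variable {f : (Fin n → ℂ) → ℂ → Fin n → ℂ} {g : (Fin n → ℂ) → ℂ → ℂ}

/-- The splitting `(z, w) ↦ (z₁, …, zₙ, w)` of the coordinates of `ℂ^(n+1)`. -/
def snocLinearEquiv (n : ℕ) : ((Fin n → ℂ) × ℂ) ≃ₗ[ℂ] (Fin (n + 1) → ℂ) where
  toFun p := Fin.snoc p.1 p.2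
  map_add' p q := by ext i; refine Fin.lastCases ?_ (fun j => ?_) i <;> simp
  map_smul' c p := by ext i; refine Fin.lastCases ?_ (fun j => ?_) i <;> simp
  invFun c := (Fin.init c, c (Fin.last n))
  left_inv p := by simp
  right_inv c := by simp

theorem snocLinearEquiv_dirCT (k : Fin (n + 1)) :
    snocLinearEquiv n (dirCT n k) = Pi.single k 1 := by
  ext i
  refine Fin.lastCases ?_ (fun j => ?_) k <;> refine Fin.lastCases ?_ (fun i => ?_) i <;>
    simp [snocLinearEquiv, dirCT, Pi.single_apply, Fin.castSucc_ne_last,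
      (Fin.castSucc_ne_last _).symm]

theorem det_jacFull {p : (Fin n → ℂ) × ℂ}
    (hfg : DifferentiableAt ℂ (fun q : (Fin n → ℂ) × ℂ => (f q.1 q.2, g q.1 q.2)) p) :
    (jacFull f g p).det =
      (fderiv ℂ (fun q : (Fin n → ℂ) × ℂ => (f q.1 q.2, g q.1 q.2)) p).det := by
  set L := fderiv ℂ (fun q : (Fin n → ℂ) × ℂ => (f q.1 q.2, g q.1 q.2)) p with hL
  set b := Module.Basis.ofEquivFun (snocLinearEquiv n)
  have hbasis : ∀ k, b k = dirCT n k := fun k =>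
    (congrFun (Module.Basis.coe_ofEquivFun _) k).trans
      ((snocLinearEquiv n).symm_apply_eq.2 (snocLinearEquiv_dirCT k).symm)
  have hcoord : ∀ (i : Fin (n + 1)) v, fderiv ℂ (fun q : (Fin n → ℂ) × ℂ =>
      (Fin.snoc (f q.1 q.2) (g q.1 q.2) : Fin (n + 1) → ℂ) i) p v =
        snocLinearEquiv n (L v) i := by
    refine Fin.lastCases (fun v => ?_) (fun j v => ?_)
    · simp only [Fin.snoc_last]
      refine (DFunLike.congr_fun hfg.hasFDerivAt.snd.fderiv v).trans ?_
      simp [snocLinearEquiv, hL]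
    · simp only [Fin.snoc_castSucc]
      refine (DFunLike.congr_fun (hasFDerivAt_pi'.1 hfg.hasFDerivAt.fst j).fderiv v).trans ?_
      simp [snocLinearEquiv, hL]
  have hjac : jacFull f g p = LinearMap.toMatrix b b L := by
    ext i k
    rw [LinearMap.toMatrix_apply, hbasis]
    exact hcoord i (dirCT n k)
  rw [hjac, LinearMap.det_toMatrix]

theorem det_jacz {z : Fin n → ℂ} (hf : DifferentiableAt ℂ (fun z => f z 0) z) :
    (jacz f z).det = (fderiv ℂ (fun z => f z 0) z).det := by
  have hjac : jacz f z = LinearMap.toMatrix' (fderiv ℂ (fun z => f z 0) z : _ →ₗ[ℂ] _) := by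
    ext i j
    rw [LinearMap.toMatrix'_apply]
    exact DFunLike.congr_fun (hasFDerivAt_pi'.1 hf.hasFDerivAt i).fderiv (Pi.single j 1)
  rw [hjac, LinearMap.det_toMatrix']

theorem deriv_zero_left_eq_fderiv
    (hfg : DifferentiableAt ℂ (fun q : (Fin n → ℂ) × ℂ => (f q.1 q.2, g q.1 q.2)) 0) :
    deriv (fun w => g 0 w) 0 =
      (fderiv ℂ (fun q : (Fin n → ℂ) × ℂ => (f q.1 q.2, g q.1 q.2)) 0 (0, 1)).2 := by
  have hincl : HasFDerivAt (fun w : ℂ => ((0 : Fin n → ℂ), w)) (.inr ℂ (Fin n → ℂ) ℂ) 0 :=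
    hasFDerivAt_prodMk_right 0 0
  exact (hfg.hasFDerivAt.comp (f := fun w : ℂ => ((0 : Fin n → ℂ), w)) 0 hincl).snd.hasDerivAt.deriv

end Coordinates

section Main

variable {Q Q' : (Fin n → ℂ) → (Fin n → ℂ) → ℂ → ℂ} {f ft : (Fin n → ℂ) → ℂ → Fin n → ℂ}
  {g gt : (Fin n → ℂ) → ℂ → ℂ}

theorem IsHSPM.segreMap (hH : IsHSPM Q Q' f g ft gt) {P P' : (Fin n → ℂ) × (Fin n → ℂ) × ℂ → ℂ}
    (hP : SegrePair (fun x => Q x.1 x.2.1 x.2.2) P)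
    (hP' : SegrePair (fun x => Q' x.1 x.2.1 x.2.2) P') :
    SegreMap (fun x => Q x.1 x.2.1 x.2.2) P (fun x => Q' x.1 x.2.1 x.2.2) P'
      (fun q => (f q.1 q.2, g q.1 q.2)) (fun q => (ft q.1 q.2, gt q.1 q.2)) := by
  obtain ⟨hf, hg, hft, hgt, hf0, hg0, hft0, hgt0, hmaps⟩ := hH
  exact ⟨hP, hP', hf.self_of_nhds.prod hg.self_of_nhds, hft.self_of_nhds.prod hgt.self_of_nhds,
    Prod.ext hf0 hg0, Prod.ext hft0 hgt0, hmaps.mono fun x hx => sub_eq_zero.2 hx.symm⟩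

namespace SegreMap

variable {Q P Q' P' : (Fin n → ℂ) × (Fin n → ℂ) × ℂ → ℂ}

theorem segreTransversal
    (h : SegreMap Q P Q' P' (fun q => (f q.1 q.2, g q.1 q.2)) fun q => (ft q.1 q.2, gt q.1 q.2))
    (hu : transversalDeriv Q (pullbackEq Q' (fun q => (f q.1 q.2, g q.1 q.2))
      fun q => (ft q.1 q.2, gt q.1 q.2)) 0 ≠ 0) :
    SegreTransversal g := by
  rw [h.transversalDeriv_zero, neg_ne_zero] at hu
  exact (deriv_zero_left_eq_fderiv h.analyticAt_left.differentiableAt).trans_ne hu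

theorem exists_det_jacFull_ne_zero
    (h : SegreMap Q P Q' P' (fun q => (f q.1 q.2, g q.1 q.2)) fun q => (ft q.1 q.2, gt q.1 q.2))
    (hF : ¬ ∀ᶠ p in 𝓝 (0 : (Fin n → ℂ) × ℂ),
      (fderiv ℂ (fun q : (Fin n → ℂ) × ℂ => (f q.1 q.2, g q.1 q.2)) p).det = 0)
    (hFt : ¬ ∀ᶠ p in 𝓝 (0 : (Fin n → ℂ) × ℂ),
      (fderiv ℂ (fun q : (Fin n → ℂ) × ℂ => (ft q.1 q.2, gt q.1 q.2)) p).det = 0) :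
    ∃ x, (jacFull f g (x.1, Q x)).det ≠ 0 ∧ (jacFull ft gt x.2).det ≠ 0 := by
  have hgraph := h.source.left.tendsto_graphMap
  obtain ⟨x, ⟨hx, hxt⟩, hfg, hfgt⟩ := ((h.frequently_det_ne_zero hF hFt).and_eventually
    ((((continuous_fst.tendsto' 0 0 rfl).comp hgraph).eventually
      h.analyticAt_left.eventually_analyticAt).and
    ((continuous_snd.tendsto' 0 0 rfl).eventually
      h.analyticAt_right.eventually_analyticAt))).exists
  exact ⟨x, (det_jacFull hfg.differentiableAt).trans_ne hx,
    (det_jacFull hfgt.differentiableAt).trans_ne hxt⟩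

theorem not_eventually_det_jacz_eq_zero
    (h : SegreMap Q P Q' P' (fun q => (f q.1 q.2, g q.1 q.2)) fun q => (ft q.1 q.2, gt q.1 q.2))
    (hsep : ∃ᶠ χ in 𝓝 (0 : Fin n → ℂ),
      Separating (fun x : (Fin n → ℂ) × (Fin n → ℂ) => Q (x.1, x.2, 0)) χ)
    (hF : ¬ ∀ᶠ p in 𝓝 (0 : (Fin n → ℂ) × ℂ),
      (fderiv ℂ (fun q : (Fin n → ℂ) × ℂ => (f q.1 q.2, g q.1 q.2)) p).det = 0) :
    ¬ ∀ᶠ χ in 𝓝 (0 : Fin n → ℂ), (jacz ft χ).det = 0 := by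
  refine fun hdet => h.not_eventually_det_slice_eq_zero hsep hF ?_
  filter_upwards [hdet, h.analyticAt_right_slice.eventually_analyticAt] with χ hχ hft
  exact (det_jacz hft.differentiableAt).symm.trans hχ

end SegreMap

theorem statement2_general (n : ℕ) (hn : 1 ≤ n)
    (Q Q' : (Fin n → ℂ) → (Fin n → ℂ) → ℂ → ℂ)
    (hQ : IsRealNormalDF Q) (hQ' : IsNormalDF Q')
    (hM : ClassC Q)
    (f ft : (Fin n → ℂ) → ℂ → Fin n → ℂ) (g gt : (Fin n → ℂ) → ℂ → ℂ)
    (hH : IsHSPM Q Q' f g ft gt) :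
    (TransversallyNull g gt ∧
      ∀ᶠ p in 𝓝 (0 : ((Fin n → ℂ) × ℂ) × ((Fin n → ℂ) × ℂ)),
        Q' (f p.1.1 p.1.2) (ft p.2.1 p.2.2) 0 = 0) ∨
    (SegreTransversal g ∧ TotallySegreNondeg f ft ∧
      (∃ (z₀ : Fin n → ℂ) (w₀ : ℂ) (χ₀ : Fin n → ℂ) (τ₀ : ℂ),
        w₀ = Q z₀ χ₀ τ₀ ∧
        (jacFull f g (z₀, w₀)).det ≠ 0 ∧ (jacFull ft gt (χ₀, τ₀)).det ≠ 0) ∧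
      ClassC Q') := by
  obtain ⟨P, hP⟩ := hQ.1.isNormal.exists_segrePair
  obtain ⟨P', hP'⟩ := hQ'.isNormal.exists_segrePair
  set F := fun q : (Fin n → ℂ) × ℂ => (f q.1 q.2, g q.1 q.2)
  set Ft := fun q : (Fin n → ℂ) × ℂ => (ft q.1 q.2, gt q.1 q.2)
  have h : SegreMap _ P _ P' F Ft := hH.segreMap hP hP'
  obtain ⟨hsepQ, hsepP⟩ := hQ.frequently_separating hM hP
  by_cases hnull : IsNull (fun x => Q' x.1 x.2.1 x.2.2) F Ft
  · exact Or.inl ⟨⟨hnull.snd_left, hnull.snd_right⟩, hnull.apply_fst⟩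
  have hF : ¬ ∀ᶠ p in 𝓝 (0 : (Fin n → ℂ) × ℂ), (fderiv ℂ F p).det = 0 :=
    mt (h.isNull_of_det_left hsepP) hnull
  have hFt : ¬ ∀ᶠ p in 𝓝 (0 : (Fin n → ℂ) × ℂ), (fderiv ℂ Ft p).det = 0 :=
    mt (h.isNull_of_det_right hsepQ) hnull
  have : NeZero n := ⟨by omega⟩
  have hu := h.transversalDeriv_zero_ne_zero hsepP hF hFt
  have hft := h.not_eventually_det_jacz_eq_zero hsepQ hF
  have hf := h.symm.not_eventually_det_jacz_eq_zero hsepP hFt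
  obtain ⟨x, hx, hxt⟩ := h.exists_det_jacFull_ne_zero hF hFt
  refine Or.inr ⟨h.segreTransversal hu, ⟨hf, hft⟩, ⟨x.1, _, x.2.1, x.2.2, rfl, hx, hxt⟩, ?_⟩
  exact (classC_iff_frequently_separating hP'.left.analyticAt_slice).2
    (h.frequently_separating_target hsepQ hF hu)

end Main

/-- Theorem 1.3: if `M` is of class `𝒞` at `0`, then either `ℋ` is
transversally null with `Q'(f, f̃, 0) ≡ 0`, or `ℋ` is Segre transversal, totally Segre
nondegenerate, a biholomorphism near some point of `ℳ`, and `M'` is of class `𝒞` at `0`. -/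
theorem statement2 (n : ℕ) (hn : 1 ≤ n)
    (Q Q' : (Fin n → ℂ) → (Fin n → ℂ) → ℂ → ℂ)
    (hQ : IsRealNormalDF Q) (hQ' : IsRealNormalDF Q')
    (hM : ClassC Q)
    (f ft : (Fin n → ℂ) → ℂ → Fin n → ℂ) (g gt : (Fin n → ℂ) → ℂ → ℂ)
    (hH : IsHSPM Q Q' f g ft gt) :
    (TransversallyNull g gt ∧
      ∀ᶠ p in 𝓝 (0 : ((Fin n → ℂ) × ℂ) × ((Fin n → ℂ) × ℂ)),
        Q' (f p.1.1 p.1.2) (ft p.2.1 p.2.2) 0 = 0) ∨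
    (SegreTransversal g ∧ TotallySegreNondeg f ft ∧
      (∃ (z₀ : Fin n → ℂ) (w₀ : ℂ) (χ₀ : Fin n → ℂ) (τ₀ : ℂ),
        w₀ = Q z₀ χ₀ τ₀ ∧
        (jacFull f g (z₀, w₀)).det ≠ 0 ∧ (jacFull ft gt (χ₀, τ₀)).det ≠ 0) ∧
      ClassC Q') :=
  statement2_general n hn Q Q' hQ hQ'.1 hM f ft g gt hH

end HSPMpaper
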